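/- For any hypothesis adjacency matrix V*: (i) if the true adjacency matrix V satisfies V ≠ V*, then limsup_{n→∞} P(V̂_n = V*) ≤ 1 − F_r(I_th); (ii) if V = V*, then liminf_{n→∞} P(V̂_n = V*) ≥ max{1 − N_0·(1 − F_r(I_th)), 0}, where r = |𝒳|^{mk}(|𝒳|^m − 1), N_1 is the number of off-diagonal ones of V*, and N_0 = m(m−1) − N_1. -/

import Mathlib

open MeasureTheory Filter Finset
open scoped BigOperators Topology ENNReal NNReal Classical

namespace DIG

/-- Extended-real logarithm: `⊥` on nonpositive reals, so that the log-likelihood of an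
impossible observation is `-∞`. -/
noncomputable def elog (x : ℝ) : EReal := if x ≤ 0 then (⊥ : EReal) else ((Real.log x : ℝ) : EReal)

/-- A block of length `L` over the alphabet `𝒳`. -/
abbrev Blk (𝒳 : Type*) (L : ℕ) : Type _ := Fin L → 𝒳

/-- A joint history of the three processes: three `k`-blocks. -/
abbrev Hist (𝒳 : Type*) (k : ℕ) : Type _ := Blk 𝒳 k × Blk 𝒳 k × Blk 𝒳 k

/-- A joint symbol of the three processes. -/
abbrev Sym (𝒳 : Type*) : Type _ := 𝒳 × 𝒳 × 𝒳

variable {𝒳 : Type*} [Fintype 𝒳] [DecidableEq 𝒳] [Nonempty 𝒳]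
variable {Ω : Type*} [MeasurableSpace Ω]

/-- The real-valued measure of a set. -/
noncomputable def mreal (μ : MeasureTheory.Measure Ω) (s : Set Ω) : ℝ := (μ s).toReal

/-- Kullback-Leibler divergence between two pmfs on a finite set (with the usual
`0 log 0 = 0` convention, automatic since `0 * x = 0`). -/
noncomputable def KLfin {S : Type*} [Fintype S] (p q : S → ℝ) : ℝ :=
  ∑ s, p s * Real.log (p s / q s)

/-- Shannon entropy of a pmf on a finite set. -/
noncomputable def Hent {S : Type*} [Fintype S] (p : S → ℝ) : ℝ :=
  -∑ s, p s * Real.log (p s)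

/-- Pushforward (marginal) of a pmf along a map of finite sets. -/
noncomputable def pushf {S T : Type*} [Fintype S] [DecidableEq T] (g : S → T) (p : S → ℝ) :
    T → ℝ := fun t => ∑ s, if g s = t then p s else 0

/-! ### Marginals of a joint distribution of `(k+1)`-blocks of three processes -/

/-- Marginal of `(Y₁ᵏ, Z₁ᵏ⁺¹)`. -/
noncomputable def margYkZ {k : ℕ} (p : Blk 𝒳 (k+1) → Blk 𝒳 (k+1) → Blk 𝒳 (k+1) → ℝ)
    (β : Blk 𝒳 k) (c : Blk 𝒳 (k+1)) : ℝ :=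
  ∑ a : Blk 𝒳 (k+1), ∑ yl : 𝒳, p a (Fin.snoc β yl) c

/-- Marginal of `(Y₁ᵏ⁺¹, Z₁ᵏ⁺¹)`. -/
noncomputable def margYZ {k : ℕ} (p : Blk 𝒳 (k+1) → Blk 𝒳 (k+1) → Blk 𝒳 (k+1) → ℝ)
    (b c : Blk 𝒳 (k+1)) : ℝ :=
  ∑ a : Blk 𝒳 (k+1), p a b c

/-- Marginal of `(X₁ᵏ⁺¹, Y₁ᵏ, Z₁ᵏ⁺¹)`. -/
noncomputable def margXYkZ {k : ℕ} (p : Blk 𝒳 (k+1) → Blk 𝒳 (k+1) → Blk 𝒳 (k+1) → ℝ)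
    (a : Blk 𝒳 (k+1)) (β : Blk 𝒳 k) (c : Blk 𝒳 (k+1)) : ℝ :=
  ∑ yl : 𝒳, p a (Fin.snoc β yl) c

/-- Marginal of `(X₁ᵏ, Y₁ᵏ, Z₁ᵏ)` (the first `k` coordinates of each block). -/
noncomputable def margK {k : ℕ} (p : Blk 𝒳 (k+1) → Blk 𝒳 (k+1) → Blk 𝒳 (k+1) → ℝ)
    (α β γ : Blk 𝒳 k) : ℝ :=
  ∑ xl : 𝒳, ∑ yl : 𝒳, ∑ zl : 𝒳, p (Fin.snoc α xl) (Fin.snoc β yl) (Fin.snoc γ zl)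

/-- Conditional mutual information `I(Y_{k+1}; X₁ᵏ⁺¹ | Y₁ᵏ, Z₁ᵏ⁺¹)` computed under the joint
pmf `p` of the three `(k+1)`-blocks. -/
noncomputable def condMI {k : ℕ} (p : Blk 𝒳 (k+1) → Blk 𝒳 (k+1) → Blk 𝒳 (k+1) → ℝ) : ℝ :=
  ∑ a : Blk 𝒳 (k+1), ∑ b : Blk 𝒳 (k+1), ∑ c : Blk 𝒳 (k+1),
    p a b c * Real.log ((p a b c * margYkZ p (Fin.init b) c) /
      (margYZ p b c * margXYkZ p a (Fin.init b) c))

/-! ### Transition matrices and factorization (absence of the edge `X → Y`) -/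

/-- `Q` is a transition probability matrix for the joint `k`-th order Markov process. -/
def IsTransMat {k : ℕ} (Q : Hist 𝒳 k → Sym 𝒳 → ℝ) : Prop :=
  (∀ h s, 0 ≤ Q h s) ∧ (∀ h, ∑ s : Sym 𝒳, Q h s = 1)

/-- The factorization of the transition matrix expressing the absence of the edge `X → Y`:
`Q(x',y',z' | hx,hy,hz) = Q1(x',z' | hx,hy,hz) · Q2(y' | hy, (hz,z'))`. -/
def IsFactorized {k : ℕ} (Q : Hist 𝒳 k → Sym 𝒳 → ℝ) : Prop :=
  ∃ (Q1 : Hist 𝒳 k → 𝒳 × 𝒳 → ℝ) (Q2 : Blk 𝒳 k × Blk 𝒳 (k+1) → 𝒳 → ℝ),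
    (∀ h p, 0 ≤ Q1 h p) ∧ (∀ h, ∑ p : 𝒳 × 𝒳, Q1 h p = 1) ∧
    (∀ h y, 0 ≤ Q2 h y) ∧ (∀ h, ∑ y : 𝒳, Q2 h y = 1) ∧
    (∀ (hx hy hz : Blk 𝒳 k) (x' y' z' : 𝒳),
      Q (hx, hy, hz) (x', y', z') = Q1 (hx, hy, hz) (x', z') * Q2 (hy, Fin.snoc hz z') y')

/-! ### The process, stationarity, Markov property, Assumption 3 -/

/-- The event that the length-`L` blocks of the three processes starting at time `t`
equal `(a, b, c)`. -/
def blockEvent (X Y Z : ℕ → Ω → 𝒳) (t L : ℕ) (a b c : Blk 𝒳 L) : Set Ω :=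
  {ω | ∀ i : Fin L, X (t + i) ω = a i ∧ Y (t + i) ω = b i ∧ Z (t + i) ω = c i}

/-- Joint stationarity of the three processes. -/
def Stationary (μ : MeasureTheory.Measure Ω) (X Y Z : ℕ → Ω → 𝒳) : Prop :=
  ∀ (t L : ℕ) (a b c : Blk 𝒳 L),
    μ (blockEvent X Y Z t L a b c) = μ (blockEvent X Y Z 0 L a b c)

/-- The joint process is Markov of order `k` with transition matrix `Q`: conditionally on the
entire past, the next joint symbol is distributed according to `Q` applied to the last
`k`-block of the past. -/
def MarkovOfOrder (μ : MeasureTheory.Measure Ω) (X Y Z : ℕ → Ω → 𝒳) (k : ℕ)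
    (Q : Hist 𝒳 k → Sym 𝒳 → ℝ) : Prop :=
  ∀ (j : ℕ) (pa pb pc : Blk 𝒳 j) (a b c : Blk 𝒳 k) (s : Sym 𝒳),
    mreal μ (blockEvent X Y Z 0 j pa pb pc ∩ blockEvent X Y Z j k a b c ∩
        {ω | X (j + k) ω = s.1 ∧ Y (j + k) ω = s.2.1 ∧ Z (j + k) ω = s.2.2})
      = Q (a, b, c) s *
        mreal μ (blockEvent X Y Z 0 j pa pb pc ∩ blockEvent X Y Z j k a b c)

/-- Assumption 3: `Y_{k+1}` is conditionally independent of the past `(Y₋∞⁰, Z₋∞⁰)` given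
`(Y₁ᵏ, Z₁ᵏ⁺¹)` (stated at every time shift `j`, which by stationarity is the one-sided
form of the two-sided statement). -/
def CondIndepPast (μ : MeasureTheory.Measure Ω) (X Y Z : ℕ → Ω → 𝒳) (k : ℕ) : Prop :=
  ∀ (j : ℕ) (py pz : Blk 𝒳 j) (b : Blk 𝒳 k) (c : Blk 𝒳 (k+1)) (y : 𝒳),
    mreal μ ({ω | Y (j + k) ω = y} ∩
        {ω | (∀ i : Fin k, Y (j + i) ω = b i) ∧ (∀ i : Fin (k+1), Z (j + i) ω = c i)} ∩
        {ω | ∀ i : Fin j, Y i ω = py i ∧ Z i ω = pz i}) *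
      mreal μ {ω | (∀ i : Fin k, Y (j + i) ω = b i) ∧ (∀ i : Fin (k+1), Z (j + i) ω = c i)}
    = mreal μ ({ω | Y (j + k) ω = y} ∩
        {ω | (∀ i : Fin k, Y (j + i) ω = b i) ∧ (∀ i : Fin (k+1), Z (j + i) ω = c i)}) *
      mreal μ ({ω | (∀ i : Fin k, Y (j + i) ω = b i) ∧ (∀ i : Fin (k+1), Z (j + i) ω = c i)} ∩
        {ω | ∀ i : Fin j, Y i ω = py i ∧ Z i ω = pz i})

/-- Measurability of the elementary events of the process. -/
def MeasProc (X Y Z : ℕ → Ω → 𝒳) : Prop :=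
  ∀ (i : ℕ) (x : 𝒳), MeasurableSet {ω | X i ω = x} ∧ MeasurableSet {ω | Y i ω = x} ∧
    MeasurableSet {ω | Z i ω = x}

/-! ### Empirical distribution, plug-in directed information, log-likelihoods -/

/-- Empirical distribution of `(k+1)`-blocks of three sample sequences of length `n`. -/
noncomputable def empDistSeq (x y z : ℕ → 𝒳) (k n : ℕ) (a b c : Blk 𝒳 (k+1)) : ℝ :=
  ((n - k : ℕ) : ℝ)⁻¹ * ∑ t ∈ Finset.range (n - k),
    if ∀ i : Fin (k+1), x (t + i) = a i ∧ y (t + i) = b i ∧ z (t + i) = c i then 1 else 0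

/-- Empirical distribution of `(k+1)`-blocks of the three processes (random). -/
noncomputable def empDist (X Y Z : ℕ → Ω → 𝒳) (k n : ℕ) (a b c : Blk 𝒳 (k+1)) (ω : Ω) : ℝ :=
  empDistSeq (fun i => X i ω) (fun i => Y i ω) (fun i => Z i ω) k n a b c

/-- The stationary `(k+1)`-block distribution `P̄`. -/
noncomputable def statDist (μ : MeasureTheory.Measure Ω) (X Y Z : ℕ → Ω → 𝒳) (k : ℕ)
    (a b c : Blk 𝒳 (k+1)) : ℝ :=
  mreal μ (blockEvent X Y Z 0 (k+1) a b c)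

/-- Plug-in estimator of the directed information:
`Î_n^{(k)}(X→Y‖Z) = I(Ŷ_{k+1}; X̂₁ᵏ⁺¹ | Ŷ₁ᵏ, Ẑ₁ᵏ⁺¹)` under the empirical distribution. -/
noncomputable def empMI (X Y Z : ℕ → Ω → 𝒳) (k n : ℕ) (ω : Ω) : ℝ :=
  condMI (fun a b c => empDist X Y Z k n a b c ω)

/-- Log-likelihood (extended-real valued) of the samples under transition matrix `Q`. -/
noncomputable def loglikSeq {k : ℕ} (Q : Hist 𝒳 k → Sym 𝒳 → ℝ) (x y z : ℕ → 𝒳) (n : ℕ) :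
    EReal :=
  ∑ i ∈ Finset.Ico k n,
    elog (Q (fun j : Fin k => x (i - k + j), fun j : Fin k => y (i - k + j),
      fun j : Fin k => z (i - k + j)) (x i, y i, z i))

/-- Log-likelihood of the process samples under transition matrix `Q`. -/
noncomputable def loglik {k : ℕ} (Q : Hist 𝒳 k → Sym 𝒳 → ℝ) (X Y Z : ℕ → Ω → 𝒳) (n : ℕ)
    (ω : Ω) : EReal :=
  loglikSeq Q (fun i => X i ω) (fun i => Y i ω) (fun i => Z i ω) n

/-- The Neyman–Pearson log-likelihood ratio `Λ_{xy,n}`: the maximal log-likelihood over all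
transition matrices minus the maximal log-likelihood over the factorized (null-hypothesis)
transition matrices. -/
noncomputable def Lambda (X Y Z : ℕ → Ω → 𝒳) (k n : ℕ) (ω : Ω) : EReal :=
  sSup {L : EReal | ∃ Q : Hist 𝒳 k → Sym 𝒳 → ℝ, IsTransMat Q ∧ L = loglik Q X Y Z n ω} -
  sSup {L : EReal | ∃ Q : Hist 𝒳 k → Sym 𝒳 → ℝ, IsTransMat Q ∧ IsFactorized Q ∧
    L = loglik Q X Y Z n ω}

/-! ### Chi-squared distribution and convergence in distribution -/

/-- The chi-squared distribution with `f` degrees of freedom: the Gamma distribution with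
shape `f/2` and rate `1/2`. -/
noncomputable def chiSq (f : ℝ) : MeasureTheory.Measure ℝ :=
  ProbabilityTheory.gammaMeasure (f / 2) (1 / 2)

/-- `W n` converges in distribution (weakly) to `ν` as `n → ∞`. -/
def TendstoInDist (μ : MeasureTheory.Measure Ω) (W : ℕ → Ω → ℝ)
    (ν : MeasureTheory.Measure ℝ) : Prop :=
  ∀ f : BoundedContinuousFunction ℝ ℝ,
    Tendsto (fun n => ∫ ω, f (W n ω) ∂μ) atTop (𝓝 (∫ x, f x ∂ν))

/-- Conditional mutual information `I(U; V | W)` of finitely-valued random variables. -/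
noncomputable def cmiRV {A B C : Type*} [Fintype A] [Fintype B] [Fintype C]
    [DecidableEq A] [DecidableEq B] [DecidableEq C]
    (μ : MeasureTheory.Measure Ω) (U : Ω → A) (V : Ω → B) (W : Ω → C) : ℝ :=
  ∑ a : A, ∑ b : B, ∑ c : C,
    mreal μ {ω | U ω = a ∧ V ω = b ∧ W ω = c} *
      Real.log ((mreal μ {ω | U ω = a ∧ V ω = b ∧ W ω = c} * mreal μ {ω | W ω = c}) /
        (mreal μ {ω | U ω = a ∧ W ω = c} * mreal μ {ω | V ω = b ∧ W ω = c}))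

end DIG

namespace DIG

variable {𝒳 : Type*} [Fintype 𝒳] [DecidableEq 𝒳] [Nonempty 𝒳]
variable {Ω : Type*} [MeasurableSpace Ω]

/-- A joint configuration of `L`-blocks of the `m` nodes. -/
abbrev MBlk (𝒳 : Type*) (m L : ℕ) := Fin m → Blk 𝒳 L

/-- A joint symbol of the `m` nodes. -/
abbrev MSym (𝒳 : Type*) (m : ℕ) := Fin m → 𝒳

/-- The event that the `L`-blocks of all `m` processes starting at time `t` equal `w`. -/
def mblockEvent {m : ℕ} (X : Fin m → ℕ → Ω → 𝒳) (t L : ℕ) (w : MBlk 𝒳 m L) : Set Ω :=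
  {ω | ∀ (l : Fin m) (i : Fin L), X l (t + i) ω = w l i}

/-- Joint stationarity of the `m` processes. -/
def MStationary {m : ℕ} (μ : MeasureTheory.Measure Ω) (X : Fin m → ℕ → Ω → 𝒳) : Prop :=
  ∀ (t L : ℕ) (w : MBlk 𝒳 m L), μ (mblockEvent X t L w) = μ (mblockEvent X 0 L w)

/-- `Q` is a transition probability matrix for the `m`-node process. -/
def MIsTransMat {m k : ℕ} (Q : MBlk 𝒳 m k → MSym 𝒳 m → ℝ) : Prop :=
  (∀ h s, 0 ≤ Q h s) ∧ (∀ h, ∑ s : MSym 𝒳 m, Q h s = 1)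

/-- The `m`-node process is jointly Markov of order `k` with transition matrix `Q`. -/
def MMarkovOfOrder {m : ℕ} (μ : MeasureTheory.Measure Ω) (X : Fin m → ℕ → Ω → 𝒳) (k : ℕ)
    (Q : MBlk 𝒳 m k → MSym 𝒳 m → ℝ) : Prop :=
  ∀ (j : ℕ) (pw : MBlk 𝒳 m j) (w : MBlk 𝒳 m k) (s : MSym 𝒳 m),
    mreal μ (mblockEvent X 0 j pw ∩ mblockEvent X j k w ∩ {ω | ∀ l, X l (j + k) ω = s l})
      = Q w s * mreal μ (mblockEvent X 0 j pw ∩ mblockEvent X j k w)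

/-- Assumption 3 for every ordered pair `(i,j)`: `X̄_{j,k+1}` is conditionally independent
of the past of `(X_j, X_{[m]∖{i,j}})` given `(X̄_{j,1}ᵏ, X̄_{[m]∖{i,j},1}ᵏ⁺¹)`. -/
def MCondIndepPast {m : ℕ} (μ : MeasureTheory.Measure Ω) (X : Fin m → ℕ → Ω → 𝒳)
    (k : ℕ) : Prop :=
  ∀ (i j : Fin m), i ≠ j →
    ∀ (t : ℕ) (p : Fin m → Blk 𝒳 t) (b : Blk 𝒳 k) (c : Fin m → Blk 𝒳 (k+1)) (y : 𝒳),
      mreal μ ({ω | X j (t + k) ω = y} ∩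
          {ω | (∀ i' : Fin k, X j (t + i') ω = b i') ∧
            ∀ l, l ≠ i → l ≠ j → ∀ i' : Fin (k+1), X l (t + i') ω = c l i'} ∩
          {ω | (∀ i' : Fin t, X j i' ω = p j i') ∧
            ∀ l, l ≠ i → l ≠ j → ∀ i' : Fin t, X l i' ω = p l i'}) *
        mreal μ {ω | (∀ i' : Fin k, X j (t + i') ω = b i') ∧
            ∀ l, l ≠ i → l ≠ j → ∀ i' : Fin (k+1), X l (t + i') ω = c l i'}
      = mreal μ ({ω | X j (t + k) ω = y} ∩
          {ω | (∀ i' : Fin k, X j (t + i') ω = b i') ∧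
            ∀ l, l ≠ i → l ≠ j → ∀ i' : Fin (k+1), X l (t + i') ω = c l i'}) *
        mreal μ ({ω | (∀ i' : Fin k, X j (t + i') ω = b i') ∧
            ∀ l, l ≠ i → l ≠ j → ∀ i' : Fin (k+1), X l (t + i') ω = c l i'} ∩
          {ω | (∀ i' : Fin t, X j i' ω = p j i') ∧
            ∀ l, l ≠ i → l ≠ j → ∀ i' : Fin t, X l i' ω = p l i'})

/-- Absence of the edge `i → j` (`v_ij = 0`): the transition matrix factorizes as
`Q = g1 · g2`, where `g1` does not depend on the next symbol of node `j`, and `g2`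
depends only on the history of node `j`, on its next symbol, and on the histories and
next symbols of the nodes other than `i` and `j`. -/
def MIsFactorizedAt {m k : ℕ} (Q : MBlk 𝒳 m k → MSym 𝒳 m → ℝ) (i j : Fin m) : Prop :=
  ∃ g1 g2 : MBlk 𝒳 m k → MSym 𝒳 m → ℝ,
    (∀ h s s', (∀ l, l ≠ j → s l = s' l) → g1 h s = g1 h s') ∧
    (∀ h h' s s', h j = h' j → s j = s' j →
      (∀ l, l ≠ i → l ≠ j → h l = h' l ∧ s l = s' l) → g2 h s = g2 h' s') ∧
    (∀ h s, Q h s = g1 h s * g2 h s)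

/-- Empirical distribution of the `(k+1)`-block configurations from `n` samples. -/
noncomputable def mEmpDist {m : ℕ} (X : Fin m → ℕ → Ω → 𝒳) (k n : ℕ)
    (w : MBlk 𝒳 m (k+1)) (ω : Ω) : ℝ :=
  ((n - k : ℕ) : ℝ)⁻¹ * ∑ t ∈ Finset.range (n - k),
    if ∀ (l : Fin m) (i : Fin (k+1)), X l (t + i) ω = w l i then 1 else 0

/-- Marginal of `(X_{j,1}ᵏ, X_{[m]∖{i,j},1}ᵏ⁺¹)` (as a function of a full configuration). -/
noncomputable def mMargA {m k : ℕ} (p : MBlk 𝒳 m (k+1) → ℝ) (i j : Fin m)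
    (w : MBlk 𝒳 m (k+1)) : ℝ :=
  ∑ w' : MBlk 𝒳 m (k+1),
    if Fin.init (w' j) = Fin.init (w j) ∧ ∀ l, l ≠ i → l ≠ j → w' l = w l then p w' else 0

/-- Marginal of `(X_{j,1}ᵏ⁺¹, X_{[m]∖{i,j},1}ᵏ⁺¹)`. -/
noncomputable def mMargB {m k : ℕ} (p : MBlk 𝒳 m (k+1) → ℝ) (i j : Fin m)
    (w : MBlk 𝒳 m (k+1)) : ℝ :=
  ∑ w' : MBlk 𝒳 m (k+1),
    if w' j = w j ∧ ∀ l, l ≠ i → l ≠ j → w' l = w l then p w' else 0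

/-- Marginal of `(X_{i,1}ᵏ⁺¹, X_{j,1}ᵏ, X_{[m]∖{i,j},1}ᵏ⁺¹)`. -/
noncomputable def mMargC {m k : ℕ} (p : MBlk 𝒳 m (k+1) → ℝ) (i j : Fin m)
    (w : MBlk 𝒳 m (k+1)) : ℝ :=
  ∑ w' : MBlk 𝒳 m (k+1),
    if w' i = w i ∧ Fin.init (w' j) = Fin.init (w j) ∧ ∀ l, l ≠ i → l ≠ j → w' l = w l
      then p w' else 0

/-- Conditional mutual information
`I(X_{j,k+1}; X_{i,1}ᵏ⁺¹ | X_{j,1}ᵏ, X_{[m]∖{i,j},1}ᵏ⁺¹)` under the joint pmf `p` of the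
`(k+1)`-block configurations. -/
noncomputable def mCondMI {m k : ℕ} (p : MBlk 𝒳 m (k+1) → ℝ) (i j : Fin m) : ℝ :=
  ∑ w : MBlk 𝒳 m (k+1),
    p w * Real.log ((p w * mMargA p i j w) / (mMargB p i j w * mMargC p i j w))

/-- The estimated adjacency matrix: `v̂_ij = 1` iff
`(n−k)·Î_n^{(k)}(X_i→X_j‖X_{[m]∖{i,j}}) ≥ I_th` (off the diagonal). -/
noncomputable def estAdj {m : ℕ} (X : Fin m → ℕ → Ω → 𝒳) (k n : ℕ) (Ith : ℝ) (ω : Ω)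
    (i j : Fin m) : Bool :=
  if i = j then false
  else if Ith ≤ ((n - k : ℕ) : ℝ) * mCondMI (fun w => mEmpDist X k n w ω) i j then true
  else false

end DIG

/-!
Blocks of length `k` form a Markov chain driven by the next symbol, with kernel `Q`. If `Q`
factorizes at `(i, j)`, Gibbs' inequality replaces the empirical conditional laws by those of `Q`
and bounds `(n - k) Î` by a relative entropy of counts, hence, by `log x ≤ x - 1`, by Pearson's
statistic of the transition counts of the whole chain. The martingale central limit theorem and a
law of large numbers for the occupation times make that statistic converge to the squared norm of a
standard Gaussian vector in the space of arrays `(v h s)` with `∑ s, √(Q h s) * v h s = 0` for each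
`h`, of dimension `r = |𝒳|^(mk) (|𝒳|^m - 1)`: this is `χ²_r`. If `Q` does not factorize, the
stationary conditional mutual information is positive, so by the law of large numbers `(n - k) Î`
diverges in probability. A single wrong entry of the hypothesis gives the first bound, and a union
bound over the off-diagonal entries the second.
-/

namespace DIG

/-! ### The squared norm of a standard Gaussian vector -/

section GaussianNorm

open ProbabilityTheory Module

variable {E : Type*} [NormedAddCommGroup E] [InnerProductSpace ℝ E] [FiniteDimensional ℝ E]
  [MeasurableSpace E] [BorelSpace E]

lemma integrable_exp_neg_half_norm_sq : Integrable fun x : E => Real.exp (-‖x‖ ^ 2 / 2) := by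
  have complex_integrable := GaussianFourier.integrable_cexp_neg_mul_sq_norm_add (V := E)
    (b := 1 / 2) (by norm_num) 0 0
  refine complex_integrable.re.congr (ae_of_all _ fun x => ?_)
  have exponent_eq : -(1 / 2) * (‖x‖ : ℂ) ^ 2 + 0 * (inner ℝ (0 : E) x : ℝ) =
      ((-‖x‖ ^ 2 / 2 : ℝ) : ℂ) := by push_cast; ring
  simp only [exponent_eq, ← Complex.ofReal_exp]
  exact RCLike.ofReal_re _

lemma integral_cexp_inner_mul_exp_neg_half_norm_sq (t : E) :
    ∫ x : E, Complex.exp (inner ℝ x t * Complex.I) * (Real.exp (-‖x‖ ^ 2 / 2) : ℂ) =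
      (∫ x : E, Real.exp (-‖x‖ ^ 2 / 2) : ℝ) * Complex.exp (-(‖t‖ : ℂ) ^ 2 / 2) := by
  have fourier (c : ℂ) : ∫ x : E, Complex.exp (c * inner ℝ t x) * (Real.exp (-‖x‖ ^ 2 / 2) : ℂ) =
      (Real.pi / (1 / 2) : ℂ) ^ (finrank ℝ E / 2 : ℂ) *
        Complex.exp (c ^ 2 * ‖t‖ ^ 2 / (4 * (1 / 2))) := by
    rw [← GaussianFourier.integral_cexp_neg_mul_sq_norm_add (by norm_num) c t]
    refine integral_congr_ae (ae_of_all _ fun x => ?_)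
    simp only [Complex.ofReal_exp, ← Complex.exp_add]
    push_cast
    ring_nf
  have normalization := fourier 0
  have character := fourier Complex.I
  simp only [zero_mul, Complex.exp_zero, one_mul, ne_eq, OfNat.ofNat_ne_zero, not_false_eq_true,
    zero_pow, zero_div, mul_one, integral_complex_ofReal] at normalization
  simp only [real_inner_comm t, mul_comm _ Complex.I, character, normalization, Complex.I_sq]
  ring_nf

lemma stdGaussian_eq_withDensity :
    stdGaussian E = volume.withDensity fun x : E => ENNReal.ofReal
      ((∫ y : E, Real.exp (-‖y‖ ^ 2 / 2))⁻¹ * Real.exp (-‖x‖ ^ 2 / 2)) := by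
  have integral_pos : 0 < ∫ y : E, Real.exp (-‖y‖ ^ 2 / 2) :=
    integral_exp_pos integrable_exp_neg_half_norm_sq
  have := isFiniteMeasure_withDensity_ofReal
    ((integrable_exp_neg_half_norm_sq (E := E)).const_mul (∫ y : E, Real.exp (-‖y‖ ^ 2 / 2))⁻¹).2
  refine Measure.ext_of_charFun (funext fun t => ?_)
  rw [charFun_stdGaussian, charFun_apply, integral_withDensity_eq_integral_toReal_smul
    (by fun_prop) (ae_of_all _ fun x => ENNReal.ofReal_lt_top)]
  calc Complex.exp (-(‖t‖ : ℂ) ^ 2 / 2)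
      = ((∫ y : E, Real.exp (-‖y‖ ^ 2 / 2))⁻¹ : ℝ) * ((∫ y : E, Real.exp (-‖y‖ ^ 2 / 2) : ℝ) *
          Complex.exp (-(‖t‖ : ℂ) ^ 2 / 2)) := by
        rw [← mul_assoc, ← Complex.ofReal_mul, inv_mul_cancel₀ integral_pos.ne',
          Complex.ofReal_one, one_mul]
    _ = _ := by
        rw [← integral_cexp_inner_mul_exp_neg_half_norm_sq, ← integral_const_mul]
        refine integral_congr_ae (ae_of_all _ fun x => ?_)
        simp only [ENNReal.toReal_ofReal
          (mul_nonneg (inv_nonneg.2 integral_pos.le) (Real.exp_nonneg _)), Complex.real_smul,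
          Complex.ofReal_mul]
        ring

lemma integral_gammaMeasure {a r : ℝ} (ha : 0 < a) (hr : 0 < r) (f : ℝ → ℝ) :
    ∫ y, f y ∂gammaMeasure a r =
      r ^ a / Real.Gamma a * ∫ y in Set.Ioi 0, y ^ (a - 1) * Real.exp (-(r * y)) * f y := by
  have pdf_measurable : Measurable (gammaPDF a r) := (measurable_gammaPDFReal a r).ennreal_ofReal
  rw [gammaMeasure, integral_withDensity_eq_integral_toReal_smul pdf_measurable
    (ae_of_all _ fun y => ENNReal.ofReal_lt_top),
    ← integral_Ici_eq_integral_Ioi, ← integral_indicator measurableSet_Ici, ← integral_const_mul]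
  refine integral_congr_ae (ae_of_all _ fun y => ?_)
  have toReal_pdf : (gammaPDF a r y).toReal = gammaPDFReal a r y :=
    ENNReal.toReal_ofReal (gammaPDFReal_nonneg ha hr y)
  simp only [toReal_pdf]
  by_cases hy : 0 ≤ y
  · rw [Set.indicator_of_mem (Set.mem_Ici.2 hy), gammaPDFReal, if_pos hy, smul_eq_mul]
    ring
  · rw [Set.indicator_of_notMem (by simpa using hy), gammaPDFReal, if_neg hy, zero_smul, mul_zero]

lemma integral_comp_norm_sq_mul_exp [Nontrivial E] (f : ℝ → ℝ) :
    ∫ x : E, Real.exp (-‖x‖ ^ 2 / 2) * f (‖x‖ ^ 2) =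
      finrank ℝ E * (volume : Measure E).real (Metric.ball 0 1) / 2 *
        ∫ y in Set.Ioi 0,
          y ^ ((finrank ℝ E : ℝ) / 2 - 1) * Real.exp (-(1 / 2 * y)) * f y := by
  rw [integral_fun_norm_addHaar volume fun r : ℝ => Real.exp (-r ^ 2 / 2) * f (r ^ 2),
    ← integral_comp_rpow_Ioi_of_pos (g := fun y : ℝ => y ^ ((finrank ℝ E : ℝ) / 2 - 1) *
      Real.exp (-(1 / 2 * y)) * f y) two_pos, nsmul_eq_mul, smul_eq_mul]
  simp only [← integral_const_mul]
  refine setIntegral_congr_fun measurableSet_Ioi fun r (hr : 0 < r) => ?_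
  have power_eq : r ^ (finrank ℝ E - 1) = r * (r ^ 2) ^ ((finrank ℝ E : ℝ) / 2 - 1) := by
    have cast_eq : ((finrank ℝ E - 1 : ℕ) : ℝ) = 1 + 2 * ((finrank ℝ E : ℝ) / 2 - 1) := by
      rw [Nat.cast_sub finrank_pos]
      ring
    rw [← Real.rpow_natCast, cast_eq, Real.rpow_add hr, Real.rpow_one, Real.rpow_mul hr.le,
      Real.rpow_two]
  have exponent_eq : (2 : ℝ) - 1 = 1 := by norm_num
  simp only [power_eq, exponent_eq, Real.rpow_one, Real.rpow_two, smul_eq_mul]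
  ring_nf

lemma integral_comp_norm_sq_stdGaussian [Nontrivial E] (f : ℝ → ℝ) :
    ∫ x : E, f (‖x‖ ^ 2) ∂stdGaussian E = ∫ y, f y ∂chiSq (finrank ℝ E) := by
  have dim_pos : (0 : ℝ) < finrank ℝ E / 2 := by
    have := finrank_pos (R := ℝ) (M := E)
    positivity
  obtain ⟨C, proportional⟩ : ∃ C : ℝ, ∀ g : ℝ → ℝ,
      ∫ x : E, g (‖x‖ ^ 2) ∂stdGaussian E = C * ∫ y, g y ∂chiSq (finrank ℝ E) := by
    have density_pos : 0 < (1 / 2 : ℝ) ^ ((finrank ℝ E : ℝ) / 2) /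
        Real.Gamma (finrank ℝ E / 2) := by
      have := Real.Gamma_pos_of_pos dim_pos
      positivity
    refine ⟨(∫ y : E, Real.exp (-‖y‖ ^ 2 / 2))⁻¹ *
      (finrank ℝ E * (volume : Measure E).real (Metric.ball 0 1) / 2) /
        ((1 / 2) ^ ((finrank ℝ E : ℝ) / 2) / Real.Gamma (finrank ℝ E / 2)), fun g => ?_⟩
    rw [chiSq, integral_gammaMeasure dim_pos one_half_pos, ← mul_assoc,
      div_mul_cancel₀ _ density_pos.ne', mul_assoc, ← integral_comp_norm_sq_mul_exp,
      ← integral_const_mul, stdGaussian_eq_withDensity,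
      integral_withDensity_eq_integral_toReal_smul (by fun_prop)
        (ae_of_all _ fun x => ENNReal.ofReal_lt_top)]
    refine integral_congr_ae (ae_of_all _ fun x => ?_)
    simp only [ENNReal.toReal_ofReal (mul_nonneg (inv_nonneg.2 (integral_nonneg fun _ : E =>
      Real.exp_nonneg _)) (Real.exp_nonneg _)), smul_eq_mul, mul_assoc]
  have : IsProbabilityMeasure (chiSq (finrank ℝ E)) :=
    isProbabilityMeasure_gammaMeasure dim_pos one_half_pos
  have C_eq_one : C = 1 := by simpa using (proportional fun _ => 1).symm
  rw [proportional, C_eq_one, one_mul]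

lemma chiSq_zero_eq_zero : chiSq 0 = 0 := by
  have pdf_eq_zero : gammaPDF 0 (1 / 2) = 0 := by
    ext y
    simp [gammaPDF, gammaPDFReal]
  rw [chiSq, zero_div, gammaMeasure, pdf_eq_zero, withDensity_zero]

lemma measureReal_chiSq_Iic_le (I : ℝ) :
    (chiSq (finrank ℝ E)).real (Set.Iic I) ≤ (stdGaussian E).real {x | ‖x‖ ^ 2 < I} := by
  rcases subsingleton_or_nontrivial E with _ | _
  · rw [finrank_zero_of_subsingleton, Nat.cast_zero, chiSq_zero_eq_zero]
    simp
  · have null : chiSq (finrank ℝ E) ≪ volume := withDensity_absolutelyContinuous _ _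
    rw [← measureReal_congr (null.ae_eq Iio_ae_eq_Iic), ← integral_indicator_one measurableSet_Iio,
      ← integral_comp_norm_sq_stdGaussian, ← integral_indicator_one
        (measurableSet_lt (by fun_prop) measurable_const)]
    rfl

lemma measureReal_chiSq_natCast_le_one (r : ℕ) (I : ℝ) : (chiSq r).real (Set.Iic I) ≤ 1 := by
  have := measureReal_chiSq_Iic_le (E := EuclideanSpace ℝ (Fin r)) I
  rw [finrank_euclideanSpace_fin] at this
  exact this.trans measureReal_le_one

end GaussianNorm

/-! ### Finite Markov kernels and the Poisson equation -/

section Kernel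

variable {H S : Type*} [Fintype S]

/-- The operator `g ↦ g - P g`, where `P g h` is the mean of `g` one step after `h`. -/
noncomputable def poissonOperator (Q : H → S → ℝ) (step : H → S → H) : (H → ℝ) →ₗ[ℝ] (H → ℝ) :=
  LinearMap.pi fun h => LinearMap.proj h - ∑ s, Q h s • LinearMap.proj (step h s)

lemma poissonOperator_apply (Q : H → S → ℝ) (step : H → S → H) (g : H → ℝ) (h : H) :
    poissonOperator Q step g h = g h - ∑ s, Q h s * g (step h s) := by
  simp [poissonOperator]

variable [Fintype H]

/-- A strictly positive transition kernel `Q` from a finite set of states to a finite set of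
symbols, for which the state moves from `h` to `step h s` when the symbol `s` is emitted. The
probability `π` on states is stationary, and every state can be reached from every other one. -/
structure IsErgodicKernel (Q : H → S → ℝ) (π : H → ℝ) (step : H → S → H) : Prop where
  kernel_pos : ∀ h s, 0 < Q h s
  sum_kernel : ∀ h, ∑ s, Q h s = 1
  stationary_nonneg : ∀ h, 0 ≤ π h
  sum_stationary : ∑ h, π h = 1
  invariant : ∀ f : H → ℝ, ∑ h, π h * ∑ s, Q h s * f (step h s) = ∑ h, π h * f h
  mem_of_closed : ∀ A : Set H, A.Nonempty → (∀ h ∈ A, ∀ s, step h s ∈ A) → ∀ h, h ∈ A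

/-- The mean of `φ` under the stationary law `π h * Q h s` of a state and the next symbol. -/
noncomputable def stationaryMean (Q : H → S → ℝ) (π : H → ℝ) (φ : H → S → ℝ) : ℝ :=
  ∑ h, π h * ∑ s, Q h s * φ h s

namespace IsErgodicKernel

variable {Q : H → S → ℝ} {π : H → ℝ} {step : H → S → H}

lemma nonempty_state (hK : IsErgodicKernel Q π step) : Nonempty H := by
  by_contra hH
  have := not_nonempty_iff.1 hH
  simpa using hK.sum_stationary

lemma stationary_pos (hK : IsErgodicKernel Q π step) (h : H) : 0 < π h := by
  have exists_pos : ∃ h, 0 < π h := by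
    by_contra! nonpos
    have := Finset.sum_nonpos fun h (_ : h ∈ univ) => nonpos h
    linarith [hK.sum_stationary]
  have closed : ∀ h, 0 < π h → ∀ s, 0 < π (step h s) := fun h hh s => by
    have mass_eq := hK.invariant (Pi.single (step h s) 1)
    simp only [Pi.single_apply, mul_ite, mul_one, mul_zero, sum_ite_eq', mem_univ, if_true]
      at mass_eq
    rw [← mass_eq]
    have term_nonneg : ∀ h' s', 0 ≤ if step h' s' = step h s then Q h' s' else 0 := fun h' s' => by
      split_ifs
      exacts [(hK.kernel_pos h' s').le, le_rfl]
    refine sum_pos' (fun h' _ => mul_nonneg (hK.stationary_nonneg h')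
      (sum_nonneg fun s' _ => term_nonneg h' s')) ⟨h, mem_univ h, mul_pos hh ?_⟩
    exact sum_pos' (fun s' _ => term_nonneg h s') ⟨s, mem_univ s, by simp [hK.kernel_pos h s]⟩
  exact hK.mem_of_closed {h | 0 < π h} exists_pos closed h

lemma eq_const_of_harmonic (hK : IsErgodicKernel Q π step) {g : H → ℝ}
    (hg : ∀ h, ∑ s, Q h s * g (step h s) = g h) : ∃ c, ∀ h, g h = c := by
  have := hK.nonempty_state
  obtain ⟨h₀, le_max⟩ := Finite.exists_max g
  have closed : ∀ h, g h = g h₀ → ∀ s, g (step h s) = g h₀ := fun h hh s => by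
    by_contra hne
    have average_lt : ∑ s, Q h s * g (step h s) < ∑ s, Q h s * g h₀ :=
      sum_lt_sum (fun s' _ => mul_le_mul_of_nonneg_left (le_max _) (hK.kernel_pos _ _).le)
        ⟨s, mem_univ s, mul_lt_mul_of_pos_left ((le_max _).lt_of_ne hne) (hK.kernel_pos _ _)⟩
    rw [hg, ← sum_mul, hK.sum_kernel, one_mul, hh] at average_lt
    exact lt_irrefl _ average_lt
  exact ⟨g h₀, hK.mem_of_closed {h | g h = g h₀} ⟨h₀, rfl⟩ closed⟩

lemma finrank_ker_poissonOperator_le (hK : IsErgodicKernel Q π step) :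
    Module.finrank ℝ (poissonOperator Q step).ker ≤ 1 := by
  have one_mem : (fun _ => 1 : H → ℝ) ∈ (poissonOperator Q step).ker := by
    ext h
    simp [poissonOperator_apply, hK.sum_kernel]
  refine finrank_le_one ⟨_, one_mem⟩ fun ⟨g, hg⟩ => ?_
  have harmonic : ∀ h, ∑ s, Q h s * g (step h s) = g h := fun h => by
    have := congrFun (LinearMap.mem_ker.1 hg) h
    rw [poissonOperator_apply, Pi.zero_apply] at this
    linarith
  obtain ⟨c, hc⟩ := hK.eq_const_of_harmonic harmonic
  exact ⟨c, Subtype.ext (funext fun h => by simp [hc])⟩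

lemma stationaryMean_le (hK : IsErgodicKernel Q π step) {φ : H → S → ℝ} {C : ℝ}
    (hφ : ∀ h s, φ h s ≤ C) : stationaryMean Q π φ ≤ C :=
  calc stationaryMean Q π φ ≤ ∑ h, π h * ∑ s, Q h s * C :=
        sum_le_sum fun h _ => mul_le_mul_of_nonneg_left (sum_le_sum fun s _ =>
          mul_le_mul_of_nonneg_left (hφ h s) (hK.kernel_pos h s).le) (hK.stationary_nonneg h)
    _ = C := by simp only [← sum_mul, hK.sum_kernel, one_mul, hK.sum_stationary]

/- The range of `1 - P` lies in the hyperplane of mean-zero functions, and has the same dimension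
because the kernel of `1 - P` is at most one-dimensional. -/
lemma exists_poisson_solution (hK : IsErgodicKernel Q π step) {f : H → ℝ}
    (hf : ∑ h, π h * f h = 0) : ∃ g : H → ℝ, ∀ h, g h - ∑ s, Q h s * g (step h s) = f h := by
  let mean : (H → ℝ) →ₗ[ℝ] ℝ := ∑ h, π h • LinearMap.proj h
  have mean_apply (g : H → ℝ) : mean g = ∑ h, π h * g h := by simp [mean]
  have range_le : (poissonOperator Q step).range ≤ mean.ker := by
    rintro _ ⟨g, rfl⟩
    rw [LinearMap.mem_ker, mean_apply]
    simp only [poissonOperator_apply, mul_sub, sum_sub_distrib, hK.invariant, sub_self]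
  have mean_surjective : mean.range = ⊤ := LinearMap.range_eq_top.2 fun c =>
    ⟨fun _ => c, by rw [mean_apply, ← sum_mul, hK.sum_stationary, one_mul]⟩
  have rank_poisson := (poissonOperator Q step).finrank_range_add_finrank_ker
  have rank_mean := mean.finrank_range_add_finrank_ker
  rw [mean_surjective, finrank_top, Module.finrank_self] at rank_mean
  have ker_le := hK.finrank_ker_poissonOperator_le
  have range_eq := Submodule.eq_of_le_of_finrank_le range_le (by omega)
  obtain ⟨g, hg⟩ : f ∈ (poissonOperator Q step).range := by
    rw [range_eq, LinearMap.mem_ker, mean_apply, hf]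
  exact ⟨g, fun h => by rw [← poissonOperator_apply, hg]⟩

end IsErgodicKernel

end Kernel

/-! ### Processes driven by a kernel -/

section Driven

variable {Ω H S : Type*}

/-- The information available at time `t`: the initial state and the symbols before time `t`. -/
def past (Hs : ℕ → Ω → H) (Ss : ℕ → Ω → S) (t : ℕ) (ω : Ω) : H × (Fin t → S) :=
  (Hs 0 ω, fun u => Ss u ω)

/-- The additive functional `∑ t < n, φ (Hs t) (Ss t)` of the process. -/
def additiveFunctional {E : Type*} [AddCommMonoid E] (Hs : ℕ → Ω → H) (Ss : ℕ → Ω → S)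
    (φ : H → S → E) (n : ℕ) (ω : Ω) : E :=
  ∑ t ∈ range n, φ (Hs t ω) (Ss t ω)

variable {Hs : ℕ → Ω → H} {Ss : ℕ → Ω → S}

lemma symbol_factorsThrough_past {t u : ℕ} (hu : u < t) : (Ss u).FactorsThrough (past Hs Ss t) :=
  fun _ _ h => congrFun (congrArg Prod.snd h) ⟨u, hu⟩

lemma exists_forall_le_of_finite {A B : Type*} [Finite A] [Finite B] (f : A → B → ℝ) :
    ∃ C, ∀ a b, f a b ≤ C := by
  obtain ⟨C, hC⟩ := (Set.finite_range fun p : A × B => f p.1 p.2).bddAbove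
  exact ⟨C, fun a b => hC ⟨(a, b), rfl⟩⟩

variable [MeasurableSpace Ω]

/-- The states `Hs` and symbols `Ss` evolve under the kernel `Q`: given the whole past up to time
`t`, the next symbol has law `Q (Hs t)`, and it determines the next state. Pasts are compared
with that of a sample point `ω₀`, so that the conditioning state `Hs t ω₀` can be named. -/
structure IsDrivenBy (μ : Measure Ω) (Q : H → S → ℝ) (step : H → S → H)
    (Hs : ℕ → Ω → H) (Ss : ℕ → Ω → S) : Prop where
  state_succ : ∀ t ω, Hs (t + 1) ω = step (Hs t ω) (Ss t ω)
  measurableSet_state_zero : ∀ h, MeasurableSet {ω | Hs 0 ω = h}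
  measurableSet_symbol : ∀ t s, MeasurableSet {ω | Ss t ω = s}
  markov : ∀ t ω₀ s, μ.real {ω | past Hs Ss t ω = past Hs Ss t ω₀ ∧ Ss t ω = s} =
    Q (Hs t ω₀) s * μ.real {ω | past Hs Ss t ω = past Hs Ss t ω₀}

lemma integrable_comp_of_finite {E T : Type*} [NormedAddCommGroup E] [Finite T] {μ : Measure Ω}
    [IsFiniteMeasure μ] {τ : Ω → T} (hτ : ∀ x, MeasurableSet {ω | τ ω = x}) (g : T → E) :
    Integrable (fun ω => g (τ ω)) μ := by
  let _ : MeasurableSpace T := ⊤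
  have τ_measurable : Measurable τ := measurable_to_countable' hτ
  exact Integrable.of_finite.comp_measurable τ_measurable

lemma integral_comp_eq_sum {E T : Type*} [NormedAddCommGroup E] [NormedSpace ℝ E] [CompleteSpace E]
    [Fintype T] {μ : Measure Ω} [IsFiniteMeasure μ] {τ : Ω → T}
    (hτ : ∀ x, MeasurableSet {ω | τ ω = x}) (g : T → E) :
    ∫ ω, g (τ ω) ∂μ = ∑ x, μ.real {ω | τ ω = x} • g x := by
  let _ : MeasurableSpace T := ⊤
  have τ_measurable : Measurable τ := measurable_to_countable' hτ
  rw [← integral_map τ_measurable.aemeasurable (by fun_prop), integral_fintype Integrable.of_finite]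
  refine sum_congr rfl fun x _ => ?_
  rw [map_measureReal_apply τ_measurable (measurableSet_singleton x)]
  rfl

namespace IsDrivenBy

variable {μ : Measure Ω} {Q : H → S → ℝ} {step : H → S → H}

lemma state_factorsThrough_past (hD : IsDrivenBy μ Q step Hs Ss) {t u : ℕ} (hu : u ≤ t) :
    (Hs u).FactorsThrough (past Hs Ss t) := by
  induction u with
  | zero => exact fun _ _ h => congrArg Prod.fst h
  | succ u ih =>
    intro ω ω' h
    rw [hD.state_succ, hD.state_succ, ih (by omega) h, symbol_factorsThrough_past (by omega) h]

lemma comp_factorsThrough_past {β : Type*} (hD : IsDrivenBy μ Q step Hs Ss) (φ : H → S → β)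
    {t u : ℕ} (hu : u < t) : (fun ω => φ (Hs u ω) (Ss u ω)).FactorsThrough (past Hs Ss t) :=
  fun _ _ h => congrArg₂ φ (hD.state_factorsThrough_past hu.le h) (symbol_factorsThrough_past hu h)

lemma additiveFunctional_factorsThrough_past {E : Type*} [AddCommMonoid E]
    (hD : IsDrivenBy μ Q step Hs Ss) (φ : H → S → E) {t n : ℕ} (hn : n ≤ t) :
    (additiveFunctional Hs Ss φ n).FactorsThrough (past Hs Ss t) :=
  fun _ _ h => sum_congr rfl fun _ hu =>
    hD.comp_factorsThrough_past φ ((mem_range.1 hu).trans_le hn) h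

lemma measurableSet_past_eq (hD : IsDrivenBy μ Q step Hs Ss) (t : ℕ) (x : H × (Fin t → S)) :
    MeasurableSet {ω | past Hs Ss t ω = x} := by
  have eq_inter : {ω | past Hs Ss t ω = x} =
      {ω | Hs 0 ω = x.1} ∩ ⋂ u : Fin t, {ω | Ss u ω = x.2 u} := by
    ext ω
    simp [past, Prod.ext_iff, funext_iff]
  rw [eq_inter]
  exact (hD.measurableSet_state_zero _).inter
    (MeasurableSet.iInter fun u => hD.measurableSet_symbol _ _)

lemma measurableSet_past_symbol_eq (hD : IsDrivenBy μ Q step Hs Ss) (t : ℕ)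
    (x : (H × (Fin t → S)) × S) : MeasurableSet {ω | (past Hs Ss t ω, Ss t ω) = x} := by
  have eq_inter : {ω | (past Hs Ss t ω, Ss t ω) = x} =
      {ω | past Hs Ss t ω = x.1} ∩ {ω | Ss t ω = x.2} := by
    ext ω
    simp [Prod.ext_iff]
  rw [eq_inter]
  exact (hD.measurableSet_past_eq t _).inter (hD.measurableSet_symbol _ _)

lemma additiveFunctional_eq_add_boundary (hD : IsDrivenBy μ Q step Hs Ss) (φ : H → S → ℝ)
    (g : H → ℝ) (m : ℝ) (n : ℕ) (ω : Ω) :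
    additiveFunctional Hs Ss φ n ω - n * m =
      additiveFunctional Hs Ss (fun h s => φ h s - m - g h + g (step h s)) n ω +
        (g (Hs 0 ω) - g (Hs n ω)) := by
  induction n with
  | zero => simp [additiveFunctional]
  | succ n ih =>
    simp only [additiveFunctional, sum_range_succ, hD.state_succ] at ih ⊢
    push_cast
    linarith

variable {E : Type*} [NormedAddCommGroup E]

lemma integrable_of_factorsThrough_past [Finite H] [Finite S] [IsFiniteMeasure μ]
    (hD : IsDrivenBy μ Q step Hs Ss) {t : ℕ} {F : Ω → E} (hF : F.FactorsThrough (past Hs Ss t)) :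
    Integrable F μ := by
  obtain ⟨G, rfl⟩ := (Function.factorsThrough_iff F).1 hF
  exact integrable_comp_of_finite (hD.measurableSet_past_eq t) _

variable [Fintype S]

lemma integral_comp_symbol [Finite H] [NormedSpace ℝ E] [CompleteSpace E] [IsFiniteMeasure μ]
    (hD : IsDrivenBy μ Q step Hs Ss) {t : ℕ} {Φ : Ω → S → E}
    (hΦ : Φ.FactorsThrough (past Hs Ss t)) :
    ∫ ω, Φ ω (Ss t ω) ∂μ = ∫ ω, ∑ s, Q (Hs t ω) s • Φ ω s ∂μ := by
  cases nonempty_fintype H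
  obtain ⟨G, rfl⟩ := (Function.factorsThrough_iff Φ).1 hΦ
  rcases isEmpty_or_nonempty Ω with _ | ⟨⟨ω₀⟩⟩
  · simp [integral_of_isEmpty]
  have : Nonempty H := ⟨Hs 0 ω₀⟩
  obtain ⟨state, state_past⟩ :=
    (Function.factorsThrough_iff (Hs t)).1 (hD.state_factorsThrough_past le_rfl)
  have markov (x : H × (Fin t → S)) (s : S) : μ.real {ω | (past Hs Ss t ω, Ss t ω) = (x, s)} =
      Q (state x) s * μ.real {ω | past Hs Ss t ω = x} := by
    by_cases hx : ∃ ω, past Hs Ss t ω = x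
    · obtain ⟨ω, rfl⟩ := hx
      simpa only [Prod.mk.injEq, state_past, Function.comp_apply] using hD.markov t ω s
    · push Not at hx
      simp [hx]
  calc ∫ ω, G (past Hs Ss t ω) (Ss t ω) ∂μ
      = ∑ x, μ.real {ω | (past Hs Ss t ω, Ss t ω) = x} • G x.1 x.2 :=
        integral_comp_eq_sum (hD.measurableSet_past_symbol_eq t) fun x => G x.1 x.2
    _ = ∑ x, μ.real {ω | past Hs Ss t ω = x} • ∑ s, Q (state x) s • G x s := by
        simp only [Fintype.sum_prod_type, markov, smul_sum, smul_smul, mul_comm]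
    _ = ∫ ω, ∑ s, Q (Hs t ω) s • G (past Hs Ss t ω) s ∂μ := by
        rw [state_past]
        exact (integral_comp_eq_sum (hD.measurableSet_past_eq t)
          fun x => ∑ s, Q (state x) s • G x s).symm

variable [IsProbabilityMeasure μ]

lemma integral_sq_additiveFunctional_le [Finite H] (hD : IsDrivenBy μ Q step Hs Ss)
    {ξ : H → S → ℝ} (centered : ∀ h, ∑ s, Q h s * ξ h s = 0)
    {C : ℝ} (hC : ∀ h s, ξ h s ^ 2 ≤ C) (n : ℕ) :
    ∫ ω, additiveFunctional Hs Ss ξ n ω ^ 2 ∂μ ≤ C * n := by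
  induction n with
  | zero => simp [additiveFunctional]
  | succ n ih =>
    set M := additiveFunctional Hs Ss ξ n
    have M_past : M.FactorsThrough (past Hs Ss n) :=
      hD.additiveFunctional_factorsThrough_past ξ le_rfl
    have cross_past : (fun ω s => M ω * ξ (Hs n ω) s).FactorsThrough (past Hs Ss n) :=
      fun _ _ h => by simp only [M_past h, hD.state_factorsThrough_past le_rfl h]
    have cross_eq_zero : ∫ ω, M ω * ξ (Hs n ω) (Ss n ω) ∂μ = 0 := by
      rw [hD.integral_comp_symbol cross_past]
      simp only [smul_eq_mul, mul_left_comm (Q _ _), ← mul_sum, centered, mul_zero, integral_zero]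
    have sq_integrable : Integrable (fun ω => M ω ^ 2) μ :=
      hD.integrable_of_factorsThrough_past (t := n) fun _ _ h => by simp only [M_past h]
    have ξ_past := hD.comp_factorsThrough_past ξ n.lt_succ_self
    have cross_integrable : Integrable (fun ω => M ω * ξ (Hs n ω) (Ss n ω)) μ :=
      hD.integrable_of_factorsThrough_past fun _ _ h => congrArg₂ (· * ·)
        (hD.additiveFunctional_factorsThrough_past ξ n.le_succ h) (ξ_past h)
    have increment_integrable : Integrable (fun ω => ξ (Hs n ω) (Ss n ω) ^ 2) μ :=
      hD.integrable_of_factorsThrough_past fun _ _ h => congrArg (· ^ 2) (ξ_past h)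
    have sum_integrable : Integrable (fun ω => M ω ^ 2 + 2 * (M ω * ξ (Hs n ω) (Ss n ω))) μ :=
      sq_integrable.add (cross_integrable.const_mul 2)
    calc ∫ ω, additiveFunctional Hs Ss ξ (n + 1) ω ^ 2 ∂μ
        = ∫ ω, (M ω ^ 2 + 2 * (M ω * ξ (Hs n ω) (Ss n ω)) + ξ (Hs n ω) (Ss n ω) ^ 2) ∂μ := by
          refine integral_congr_ae (ae_of_all _ fun ω => ?_)
          simp only [additiveFunctional, sum_range_succ, M]
          ring
      _ = ∫ ω, M ω ^ 2 ∂μ + ∫ ω, ξ (Hs n ω) (Ss n ω) ^ 2 ∂μ := by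
          rw [integral_add sum_integrable increment_integrable,
            integral_add sq_integrable (cross_integrable.const_mul 2), integral_const_mul,
            cross_eq_zero, mul_zero, add_zero]
      _ ≤ C * n + ∫ _, C ∂μ :=
          add_le_add ih (integral_mono increment_integrable (integrable_const C) fun _ => hC _ _)
      _ = C * ↑(n + 1) := by simp [mul_add]

lemma integral_abs_additiveFunctional_le [Finite H] (hD : IsDrivenBy μ Q step Hs Ss)
    {ξ : H → S → ℝ} (centered : ∀ h, ∑ s, Q h s * ξ h s = 0)
    {C : ℝ} (hC : ∀ h s, ξ h s ^ 2 ≤ C) (n : ℕ) :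
    ∫ ω, |additiveFunctional Hs Ss ξ n ω| ∂μ ≤ (C + 1) * √n := by
  rcases n.eq_zero_or_pos with rfl | hn
  · simp [additiveFunctional]
  set M := additiveFunctional Hs Ss ξ n
  have M_past : M.FactorsThrough (past Hs Ss n) :=
    hD.additiveFunctional_factorsThrough_past ξ le_rfl
  have : 0 < √(n : ℝ) := Real.sqrt_pos.2 (mod_cast hn)
  have abs_integrable : Integrable (fun ω => |M ω|) μ :=
    hD.integrable_of_factorsThrough_past (t := n) fun _ _ h => by simp only [M_past h]
  have sq_integrable : Integrable (fun ω => M ω ^ 2) μ :=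
    hD.integrable_of_factorsThrough_past (t := n) fun _ _ h => by simp only [M_past h]
  calc ∫ ω, |M ω| ∂μ ≤ ∫ ω, (M ω ^ 2 / √n + √n) ∂μ := by
        refine integral_mono abs_integrable
          ((sq_integrable.div_const _).add (integrable_const _)) fun ω => ?_
        rw [← sq_abs, ← sub_nonneg]
        have : |M ω| ^ 2 / √n + √n - |M ω| =
            ((|M ω| - √n / 2) ^ 2 + 3 / 4 * √n ^ 2) / √n := by
          field_simp
          ring
        simp only [this]
        positivity
    _ = (∫ ω, M ω ^ 2 ∂μ) / √n + √n := by
        rw [integral_add (sq_integrable.div_const _) (integrable_const _), integral_div]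
        simp
    _ ≤ C * n / √n + √n := by
        gcongr
        exact hD.integral_sq_additiveFunctional_le centered hC n
    _ = (C + 1) * √n := by
        rw [mul_div_assoc, Real.div_sqrt]
        ring

variable [Fintype H]

lemma exists_integral_abs_additiveFunctional_sub_le {π : H → ℝ} (hK : IsErgodicKernel Q π step)
    (hD : IsDrivenBy μ Q step Hs Ss) (φ : H → S → ℝ) : ∃ A B : ℝ, ∀ n : ℕ,
      ∫ ω, |additiveFunctional Hs Ss φ n ω - n * stationaryMean Q π φ| ∂μ ≤ A * √n + B := by
  set m := stationaryMean Q π φ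
  have mean_zero : ∑ h, π h * (∑ s, Q h s * φ h s - m) = 0 := by
    simp only [mul_sub, sum_sub_distrib, ← sum_mul, hK.sum_stationary, one_mul]
    exact sub_self _
  obtain ⟨g, hg⟩ := hK.exists_poisson_solution mean_zero
  let ξ : H → S → ℝ := fun h s => φ h s - m - g h + g (step h s)
  have centered : ∀ h, ∑ s, Q h s * ξ h s = 0 := fun h => by
    simp only [ξ, mul_add, mul_sub, sum_add_distrib, sum_sub_distrib, ← sum_mul, hK.sum_kernel,
      one_mul]
    linarith [hg h]
  obtain ⟨C, hC⟩ := exists_forall_le_of_finite fun h s => ξ h s ^ 2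
  obtain ⟨B, hB⟩ := exists_forall_le_of_finite fun h h' => |g h - g h'|
  refine ⟨C + 1, B, fun n => ?_⟩
  have abs_integrable : Integrable (fun ω => |additiveFunctional Hs Ss ξ n ω|) μ :=
    hD.integrable_of_factorsThrough_past (t := n) fun _ _ h => by
      simp only [hD.additiveFunctional_factorsThrough_past ξ le_rfl h]
  calc ∫ ω, |additiveFunctional Hs Ss φ n ω - n * m| ∂μ
      ≤ ∫ ω, (|additiveFunctional Hs Ss ξ n ω| + B) ∂μ := by
        refine integral_mono_of_nonneg (ae_of_all _ fun _ => abs_nonneg _)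
          (abs_integrable.add (integrable_const B)) (ae_of_all _ fun ω => ?_)
        simp only [hD.additiveFunctional_eq_add_boundary φ g]
        exact (abs_add_le _ _).trans (add_le_add le_rfl (hB _ _))
    _ = ∫ ω, |additiveFunctional Hs Ss ξ n ω| ∂μ + B := by
        rw [integral_add abs_integrable (integrable_const B)]
        simp
    _ ≤ (C + 1) * √n + B := by
        gcongr
        exact hD.integral_abs_additiveFunctional_le centered hC n

lemma tendsto_integral_abs_average_sub {π : H → ℝ} (hK : IsErgodicKernel Q π step)
    (hD : IsDrivenBy μ Q step Hs Ss) (φ : H → S → ℝ) :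
    Tendsto (fun n : ℕ => ∫ ω, |additiveFunctional Hs Ss φ n ω / n - stationaryMean Q π φ| ∂μ)
      atTop (𝓝 0) := by
  obtain ⟨A, B, bound⟩ := hD.exists_integral_abs_additiveFunctional_sub_le hK φ
  have average_le : ∀ n : ℕ, 0 < n →
      ∫ ω, |additiveFunctional Hs Ss φ n ω / n - stationaryMean Q π φ| ∂μ ≤
        A / √n + B / n := fun n hn => by
    have n_pos : (0 : ℝ) < n := mod_cast hn
    simp only [div_sub' n_pos.ne', abs_div, abs_of_pos n_pos, integral_div]
    calc _ ≤ (A * √n + B) / n := by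
          gcongr
          exact bound n
      _ = A / √n + B / n := by rw [add_div, mul_div_assoc, Real.sqrt_div_self', mul_one_div]
  have bound_tendsto : Tendsto (fun n : ℕ => A / √n + B / n) atTop (𝓝 0) := by
    simpa using (tendsto_const_nhds.div_atTop (Real.tendsto_sqrt_atTop.comp
      tendsto_natCast_atTop_atTop)).add (tendsto_const_div_atTop_nhds_zero_nat B)
  exact squeeze_zero' (Eventually.of_forall fun n => integral_nonneg fun _ => abs_nonneg _)
    ((eventually_gt_atTop 0).mono average_le) bound_tendsto

lemma tendstoInMeasure_average {π : H → ℝ} (hK : IsErgodicKernel Q π step)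
    (hD : IsDrivenBy μ Q step Hs Ss) (φ : H → S → ℝ) :
    TendstoInMeasure μ (fun (n : ℕ) ω => additiveFunctional Hs Ss φ n ω / n) atTop
      fun _ => stationaryMean Q π φ := by
  have integrable (n : ℕ) : Integrable (fun ω => additiveFunctional Hs Ss φ n ω / n) μ :=
    hD.integrable_of_factorsThrough_past (t := n) fun _ _ h => by
      simp only [hD.additiveFunctional_factorsThrough_past φ le_rfl h]
  refine tendstoInMeasure_of_tendsto_eLpNorm one_ne_zero (fun n => (integrable n).1)
    aestronglyMeasurable_const ?_
  have limit := ENNReal.tendsto_ofReal (hD.tendsto_integral_abs_average_sub hK φ)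
  rw [ENNReal.ofReal_zero] at limit
  refine limit.congr fun n => ?_
  simp only [← Real.norm_eq_abs]
  rw [eLpNorm_one_eq_lintegral_enorm]
  exact ofReal_integral_norm_eq_lintegral_enorm ((integrable n).sub (integrable_const _))

end IsDrivenBy

end Driven

/-! ### Central limit theorem for additive functionals -/

section CentralLimit

open Asymptotics

/-- The exponent `i ξ x + v x² / 2`. Its exponential has mean `1 + o(x²)` when `ξ` is centred with
variance `v`, which makes products of such exponentials almost a martingale. -/
noncomputable def compensatedExponent (ξ v x : ℝ) : ℂ :=
  ξ * x * Complex.I + v / 2 * x ^ 2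

lemma compensatedExponent_re (ξ v x : ℝ) : (compensatedExponent ξ v x).re = v / 2 * x ^ 2 := by
  simp [compensatedExponent, ← Complex.ofReal_pow]

lemma compensatedExponent_isBigO (ξ v : ℝ) : compensatedExponent ξ v =O[𝓝 0] fun x : ℝ => x := by
  have factor : compensatedExponent ξ v =
      fun x : ℝ => (x : ℂ) * (ξ * Complex.I + v / 2 * x) := by
    ext x
    simp only [compensatedExponent]
    ring
  have linear : (fun x : ℝ => (x : ℂ)) =O[𝓝 0] fun x : ℝ => x :=
    IsBigO.of_norm_left (by simpa only [Complex.norm_real] using (isBigO_refl _ _).norm_left)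
  have bounded : (fun x : ℝ => (ξ * Complex.I + v / 2 * x : ℂ)) =O[𝓝 0] fun _ => (1 : ℝ) :=
    (by fun_prop : Continuous fun x : ℝ => (ξ * Complex.I + v / 2 * x : ℂ)).continuousAt
      |>.isBigO_one ℝ
  rw [factor]
  simpa using linear.mul bounded

lemma cexp_taylor_two_isLittleO :
    (fun z : ℂ => Complex.exp z - (1 + z + z ^ 2 / 2)) =o[𝓝 0] fun z => z ^ 2 := by
  have taylor := (Complex.exp_sub_sum_range_isBigO_pow 3).trans_isLittleO
    (isLittleO_pow_pow (𝕜 := ℂ) (by norm_num : 2 < 3))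
  simpa [sum_range_succ, Nat.factorial] using taylor

lemma cexp_compensatedExponent_isLittleO (ξ v : ℝ) :
    (fun x : ℝ => Complex.exp (compensatedExponent ξ v x) -
      (1 + compensatedExponent ξ v x + compensatedExponent ξ v x ^ 2 / 2)) =o[𝓝 0]
        fun x => x ^ 2 := by
  have tendsto_zero : Tendsto (compensatedExponent ξ v) (𝓝 0) (𝓝 0) :=
    (compensatedExponent_isBigO ξ v).trans_tendsto tendsto_id
  exact (cexp_taylor_two_isLittleO.comp_tendsto tendsto_zero).trans_isBigO
    ((compensatedExponent_isBigO ξ v).pow 2)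

lemma sum_mul_cexp_compensatedExponent_isLittleO {S : Type*} [Fintype S] {q ξ : S → ℝ}
    {v : ℝ} (sum_one : ∑ s, q s = 1)
    (centered : ∑ s, q s * ξ s = 0) (variance : ∑ s, q s * ξ s ^ 2 = v) :
    (fun x : ℝ => ∑ s, (q s : ℂ) * Complex.exp (compensatedExponent (ξ s) v x) - 1) =o[𝓝 0]
      fun x => x ^ 2 := by
  have sum_one' : ∑ s, (q s : ℂ) = 1 := mod_cast sum_one
  have centered' : ∑ s, (q s : ℂ) * ξ s = 0 := mod_cast centered
  have variance' : ∑ s, (q s : ℂ) * (ξ s : ℂ) ^ 2 = v := mod_cast variance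
  have expand (x : ℝ) : ∑ s, (q s : ℂ) * Complex.exp (compensatedExponent (ξ s) v x) - 1 =
      ∑ s, (q s : ℂ) * (Complex.exp (compensatedExponent (ξ s) v x) - (1 +
        compensatedExponent (ξ s) v x + compensatedExponent (ξ s) v x ^ 2 / 2)) +
        ((v ^ 2 / 8 * x ^ 4 : ℝ) : ℂ) := by
    have term (s : S) : (q s : ℂ) * (Complex.exp (compensatedExponent (ξ s) v x) - (1 +
          compensatedExponent (ξ s) v x + compensatedExponent (ξ s) v x ^ 2 / 2)) =
        q s * Complex.exp (compensatedExponent (ξ s) v x)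
          - q s * (1 + v / 2 * x ^ 2 + v ^ 2 / 8 * x ^ 4)
          - q s * ξ s * (x * Complex.I + v / 2 * x ^ 3 * Complex.I)
          + q s * (ξ s : ℂ) ^ 2 * (x ^ 2 / 2) := by
      simp only [compensatedExponent]
      linear_combination (-(q s : ℂ) * (ξ s) ^ 2 * x ^ 2 / 2) * Complex.I_sq
    simp only [term, sum_add_distrib, sum_sub_distrib, ← sum_mul, sum_one', centered', variance']
    push_cast
    ring
  have remainder : (fun x : ℝ => ((v ^ 2 / 8 * x ^ 4 : ℝ) : ℂ)) =o[𝓝 0] fun x => x ^ 2 :=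
    isLittleO_norm_left.1 <| by
      simp only [Complex.norm_real]
      exact ((isLittleO_pow_pow (by norm_num)).const_mul_left _).norm_left
  simp only [expand]
  exact (IsLittleO.fun_sum fun s _ =>
    (cexp_compensatedExponent_isLittleO (ξ s) v).const_mul_left (q s : ℂ)).add remainder

lemma tendsto_inv_sqrt_natCast : Tendsto (fun n : ℕ => (√n)⁻¹) atTop (𝓝 0) :=
  tendsto_inv_atTop_zero.comp (Real.tendsto_sqrt_atTop.comp tendsto_natCast_atTop_atTop)

lemma natCast_mul_inv_sqrt_sq {n : ℕ} (hn : 0 < n) : n * (√n)⁻¹ ^ 2 = 1 := by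
  rw [inv_pow, Real.sq_sqrt n.cast_nonneg, mul_inv_cancel₀ (mod_cast hn.ne')]

lemma tendsto_mul_norm_comp_inv_sqrt {f : ℝ → ℂ} (hf : f =o[𝓝 0] fun x => x ^ 2) :
    Tendsto (fun n : ℕ => n * ‖f (√n)⁻¹‖) atTop (𝓝 0) := by
  have ratio := (hf.norm_left.tendsto_div_nhds_zero).comp tendsto_inv_sqrt_natCast
  refine ratio.congr' <| (eventually_gt_atTop 0).mono fun n hn => ?_
  have := natCast_mul_inv_sqrt_sq hn
  rw [Function.comp_apply, div_eq_iff (by positivity), mul_right_comm, this, one_mul]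

lemma abs_exp_sub_exp_le {a b c : ℝ} (ha : a ≤ c) (hb : b ≤ c) :
    |Real.exp a - Real.exp b| ≤ Real.exp c * |a - b| := by
  wlog hab : b ≤ a generalizing a b
  · rw [abs_sub_comm, abs_sub_comm a]
    exact this hb ha (le_of_not_ge hab)
  rw [abs_of_nonneg (sub_nonneg.2 (Real.exp_le_exp.2 hab)), abs_of_nonneg (sub_nonneg.2 hab)]
  calc Real.exp a - Real.exp b = Real.exp a * (1 - Real.exp (b - a)) := by
        rw [mul_sub, ← Real.exp_add]
        ring_nf
    _ ≤ Real.exp c * (a - b) := by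
        have one_sub_le : 1 - Real.exp (b - a) ≤ a - b := by linarith [Real.add_one_le_exp (b - a)]
        have one_sub_nonneg : 0 ≤ 1 - Real.exp (b - a) :=
          sub_nonneg.2 (Real.exp_le_one_iff.2 (by linarith))
        exact mul_le_mul (Real.exp_le_exp.2 ha) one_sub_le one_sub_nonneg (Real.exp_nonneg c)

variable {Ω H S : Type*} {Hs : ℕ → Ω → H} {Ss : ℕ → Ω → S}

/-- The product over `t < n` of the exponentials of the compensated exponents of `ξ (Hs t) (Ss t)`,
where `v h` is the variance compensated for in state `h`. -/
noncomputable def compensatedExp (Hs : ℕ → Ω → H) (Ss : ℕ → Ω → S) (ξ : H → S → ℝ) (v : H → ℝ)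
    (x : ℝ) (n : ℕ) (ω : Ω) : ℂ :=
  Complex.exp (additiveFunctional Hs Ss (fun h s => compensatedExponent (ξ h s) (v h) x) n ω)

lemma norm_compensatedExp_le {ξ : H → S → ℝ} {v : H → ℝ} {x C : ℝ} {n : ℕ} (hC : 0 ≤ C)
    (hv : ∀ h, v h ≤ C) (hx : n * x ^ 2 ≤ 1) (ω : Ω) :
    ‖compensatedExp Hs Ss ξ v x n ω‖ ≤ Real.exp (C / 2) := by
  rw [compensatedExp, Complex.norm_exp, additiveFunctional, Complex.re_sum]
  simp only [compensatedExponent_re]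
  gcongr
  calc ∑ t ∈ range n, v (Hs t ω) / 2 * x ^ 2 ≤ ∑ t ∈ range n, C / 2 * x ^ 2 := by
        gcongr
        exact hv _
    _ = C / 2 * (n * x ^ 2) := by
        simp
        ring
    _ ≤ C / 2 := mul_le_of_le_one_right (by positivity) hx

lemma compensatedExp_eq_mul (ξ : H → S → ℝ) (v : H → ℝ) (x : ℝ) (n : ℕ) (ω : Ω) :
    compensatedExp Hs Ss ξ v x n ω =
      (Real.exp (additiveFunctional Hs Ss (fun h _ => v h) n ω * x ^ 2 / 2) : ℂ) *
        Complex.exp ((additiveFunctional Hs Ss ξ n ω * x : ℝ) * Complex.I) := by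
  rw [compensatedExp, Complex.ofReal_exp, ← Complex.exp_add]
  simp only [additiveFunctional, compensatedExponent, sum_add_distrib]
  push_cast
  simp only [← sum_mul, ← sum_div]
  ring_nf

lemma norm_compensatedExp_sub_le {ξ : H → S → ℝ} {v : H → ℝ} {σ C : ℝ} (hv : ∀ h, v h ≤ C)
    (hσ : σ ≤ C) {n : ℕ} (hn : 0 < n) (ω : Ω) :
    ‖compensatedExp Hs Ss ξ v (√n)⁻¹ n ω - Real.exp (σ / 2) *
        Complex.exp ((additiveFunctional Hs Ss ξ n ω * (√n)⁻¹ : ℝ) * Complex.I)‖ ≤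
      Real.exp (C / 2) / 2 * |additiveFunctional Hs Ss (fun h _ => v h) n ω / n - σ| := by
  have average_le : additiveFunctional Hs Ss (fun h _ => v h) n ω / n ≤ C :=
    (div_le_iff₀' (mod_cast hn)).2 <| by
      simpa [additiveFunctional] using sum_le_card_nsmul (range n) _ C fun t _ => hv (Hs t ω)
  rw [compensatedExp_eq_mul, ← sub_mul, norm_mul, Complex.norm_exp_ofReal_mul_I, mul_one,
    ← Complex.ofReal_sub, Complex.norm_real, Real.norm_eq_abs, inv_pow,
    Real.sq_sqrt n.cast_nonneg, ← div_eq_mul_inv]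
  calc _ ≤ Real.exp (C / 2) *
        |additiveFunctional Hs Ss (fun h _ => v h) n ω / n / 2 - σ / 2| :=
        abs_exp_sub_exp_le (by linarith) (by linarith)
    _ = _ := by
        rw [← sub_div, abs_div, abs_two]
        ring

variable [MeasurableSpace Ω] [Fintype S] {μ : Measure Ω} [IsProbabilityMeasure μ]
  {Q : H → S → ℝ} {π : H → ℝ} {step : H → S → H}

namespace IsDrivenBy

lemma integral_compensatedExp_succ [Finite H] (hD : IsDrivenBy μ Q step Hs Ss) (ξ : H → S → ℝ)
    (v : H → ℝ) (x : ℝ) (n : ℕ) : ∫ ω, compensatedExp Hs Ss ξ v x (n + 1) ω ∂μ =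
      ∫ ω, compensatedExp Hs Ss ξ v x n ω ∂μ + ∫ ω, compensatedExp Hs Ss ξ v x n ω *
        (∑ s, (Q (Hs n ω) s : ℂ) *
          Complex.exp (compensatedExponent (ξ (Hs n ω) s) (v (Hs n ω)) x) - 1) ∂μ := by
  set D := compensatedExp Hs Ss ξ v x n
  have D_past : D.FactorsThrough (past Hs Ss n) := fun _ _ h =>
    congrArg Complex.exp (hD.additiveFunctional_factorsThrough_past _ le_rfl h)
  have product_past : (fun ω s => D ω * Complex.exp (compensatedExponent (ξ (Hs n ω) s)
      (v (Hs n ω)) x)).FactorsThrough (past Hs Ss n) := fun _ _ h => by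
    simp only [D_past h, hD.state_factorsThrough_past le_rfl h]
  rw [← integral_add (hD.integrable_of_factorsThrough_past D_past)]
  · calc ∫ ω, compensatedExp Hs Ss ξ v x (n + 1) ω ∂μ
        = ∫ ω, D ω * Complex.exp
            (compensatedExponent (ξ (Hs n ω) (Ss n ω)) (v (Hs n ω)) x) ∂μ := by
          simp only [D, compensatedExp, additiveFunctional, sum_range_succ, Complex.exp_add]
      _ = _ := by
          rw [hD.integral_comp_symbol product_past]
          simp only [Complex.real_smul, mul_sub, mul_one, mul_sum, mul_left_comm (D _),
            add_sub_cancel]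
  · exact hD.integrable_of_factorsThrough_past (t := n) fun _ _ h => by
      simp only [D_past h, hD.state_factorsThrough_past le_rfl h]

lemma norm_integral_compensatedExp_sub_one_le [Finite H] (hD : IsDrivenBy μ Q step Hs Ss)
    {ξ : H → S → ℝ} {v : H → ℝ} {x C δ : ℝ} (hC : 0 ≤ C) (hv : ∀ h, v h ≤ C)
    (hδ : ∀ h, ‖∑ s, (Q h s : ℂ) * Complex.exp (compensatedExponent (ξ h s) (v h) x) - 1‖ ≤ δ)
    {n : ℕ} (hx : n * x ^ 2 ≤ 1) :
    ‖∫ ω, compensatedExp Hs Ss ξ v x n ω ∂μ - 1‖ ≤ n * (Real.exp (C / 2) * δ) := by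
  induction n with
  | zero => simp [compensatedExp, additiveFunctional]
  | succ n ih =>
    have hx' : n * x ^ 2 ≤ 1 := le_trans (by gcongr; simp) hx
    have increment_le : ‖∫ ω, compensatedExp Hs Ss ξ v x n ω * (∑ s, (Q (Hs n ω) s : ℂ) *
        Complex.exp (compensatedExponent (ξ (Hs n ω) s) (v (Hs n ω)) x) - 1) ∂μ‖ ≤
        Real.exp (C / 2) * δ := by
      refine (norm_integral_le_of_norm_le_const (C := Real.exp (C / 2) * δ)
        (ae_of_all _ fun ω => ?_)).trans (by simp)
      rw [norm_mul]
      gcongr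
      exacts [norm_compensatedExp_le hC hv hx' ω, hδ _]
    rw [hD.integral_compensatedExp_succ, add_sub_right_comm]
    calc _ ≤ n * (Real.exp (C / 2) * δ) + Real.exp (C / 2) * δ :=
          (norm_add_le _ _).trans (add_le_add (ih hx') increment_le)
      _ = _ := by
          push_cast
          ring

variable [Fintype H]

lemma tendsto_integral_compensatedExp (hK : IsErgodicKernel Q π step)
    (hD : IsDrivenBy μ Q step Hs Ss) {ξ : H → S → ℝ} (centered : ∀ h, ∑ s, Q h s * ξ h s = 0) :
    Tendsto (fun n : ℕ => ∫ ω, compensatedExp Hs Ss ξ (fun h => ∑ s, Q h s * ξ h s ^ 2)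
      (√n)⁻¹ n ω ∂μ) atTop (𝓝 1) := by
  set v : H → ℝ := fun h => ∑ s, Q h s * ξ h s ^ 2
  obtain ⟨C, hC⟩ := (Set.finite_range v).bddAbove
  have hv (h : H) : v h ≤ max C 0 := le_max_of_le_left (hC ⟨h, rfl⟩)
  set error : H → ℝ → ℂ := fun h x =>
    ∑ s, (Q h s : ℂ) * Complex.exp (compensatedExponent (ξ h s) (v h) x) - 1
  have error_tendsto : Tendsto (fun n : ℕ => Real.exp (max C 0 / 2) *
      ∑ h, n * ‖error h (√n)⁻¹‖) atTop (𝓝 0) := by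
    simpa using (tendsto_finsetSum univ fun h _ => tendsto_mul_norm_comp_inv_sqrt
      (sum_mul_cexp_compensatedExponent_isLittleO (hK.sum_kernel h) (centered h) rfl)).const_mul
        (Real.exp (max C 0 / 2))
  rw [tendsto_iff_norm_sub_tendsto_zero]
  refine squeeze_zero' (Eventually.of_forall fun _ => norm_nonneg _) ?_ error_tendsto
  filter_upwards [eventually_gt_atTop 0] with n hn
  calc _ ≤ n * (Real.exp (max C 0 / 2) * ∑ h, ‖error h (√n)⁻¹‖) :=
        hD.norm_integral_compensatedExp_sub_one_le (le_max_right _ _) hv (fun h =>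
          single_le_sum (f := fun h => ‖error h (√n)⁻¹‖) (fun _ _ => norm_nonneg _) (mem_univ h))
          (natCast_mul_inv_sqrt_sq hn).le
    _ = _ := by
        rw [← mul_sum]
        ring

/- The compensator converges in `L¹` by the law of large numbers, so it can be replaced by its
limit `exp (σ² / 2)`. -/
lemma tendsto_integral_compensatedExp_sub (hK : IsErgodicKernel Q π step)
    (hD : IsDrivenBy μ Q step Hs Ss) (ξ : H → S → ℝ) (v : H → ℝ) :
    Tendsto (fun n : ℕ => ∫ ω, compensatedExp Hs Ss ξ v (√n)⁻¹ n ω ∂μ -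
      Real.exp (stationaryMean Q π (fun h _ => v h) / 2) *
        ∫ ω, Complex.exp ((additiveFunctional Hs Ss ξ n ω * (√n)⁻¹ : ℝ) * Complex.I) ∂μ)
      atTop (𝓝 0) := by
  set σ := stationaryMean Q π fun h _ => v h
  obtain ⟨C, hC⟩ := (Set.finite_range v).bddAbove
  have hv (h : H) : v h ≤ C := hC ⟨h, rfl⟩
  have σ_le : σ ≤ C := hK.stationaryMean_le fun h _ => hv h
  have lln := (hD.tendsto_integral_abs_average_sub hK fun h _ => v h).const_mul
    (Real.exp (C / 2) / 2)
  rw [mul_zero] at lln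
  refine squeeze_zero_norm' ((eventually_gt_atTop 0).mono fun n hn => ?_) lln
  have D_integrable : Integrable (compensatedExp Hs Ss ξ v (√n)⁻¹ n) μ :=
    hD.integrable_of_factorsThrough_past (t := n) fun _ _ h =>
      congrArg Complex.exp (hD.additiveFunctional_factorsThrough_past _ le_rfl h)
  have Z_integrable : Integrable (fun ω =>
      Complex.exp ((additiveFunctional Hs Ss ξ n ω * (√n)⁻¹ : ℝ) * Complex.I)) μ :=
    hD.integrable_of_factorsThrough_past (t := n) fun _ _ h => by
      simp only [hD.additiveFunctional_factorsThrough_past ξ le_rfl h]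
  have V_integrable :
      Integrable (fun ω => |additiveFunctional Hs Ss (fun h _ => v h) n ω / n - σ|) μ :=
    hD.integrable_of_factorsThrough_past (t := n) fun _ _ h => by
      simp only [hD.additiveFunctional_factorsThrough_past (fun h _ => v h) le_rfl h]
  rw [← integral_const_mul, ← integral_sub D_integrable (Z_integrable.const_mul _),
    ← integral_const_mul]
  exact norm_integral_le_of_norm_le (V_integrable.const_mul _)
    (ae_of_all _ (norm_compensatedExp_sub_le hv σ_le hn))

lemma tendsto_integral_cexp_additiveFunctional (hK : IsErgodicKernel Q π step)
    (hD : IsDrivenBy μ Q step Hs Ss) {ξ : H → S → ℝ} (centered : ∀ h, ∑ s, Q h s * ξ h s = 0) :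
    Tendsto (fun n : ℕ =>
      ∫ ω, Complex.exp ((additiveFunctional Hs Ss ξ n ω * (√n)⁻¹ : ℝ) * Complex.I) ∂μ)
      atTop (𝓝 (Real.exp (-stationaryMean Q π (fun h s => ξ h s ^ 2) / 2))) := by
  set v : H → ℝ := fun h => ∑ s, Q h s * ξ h s ^ 2
  have mean_eq : stationaryMean Q π (fun h _ => v h) = stationaryMean Q π fun h s => ξ h s ^ 2 := by
    simp only [stationaryMean, ← sum_mul, hK.sum_kernel, one_mul, v]
  have limit := ((hD.tendsto_integral_compensatedExp hK centered).sub
    (hD.tendsto_integral_compensatedExp_sub hK ξ v)).const_mul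
      (Real.exp (-stationaryMean Q π (fun h s => ξ h s ^ 2) / 2) : ℂ)
  rw [sub_zero, mul_one, mean_eq] at limit
  refine limit.congr fun n => ?_
  rw [sub_sub_cancel, ← mul_assoc, ← Complex.ofReal_mul, ← Real.exp_add, ← add_div,
    neg_add_cancel, zero_div, Real.exp_zero, Complex.ofReal_one, one_mul]

end IsDrivenBy

end CentralLimit

/-! ### The Pearson statistic of a driven process -/

section Pearson

open Module ProbabilityTheory

lemma tendstoInMeasure_pi {ι Ω : Type*} [Fintype ι] [MeasurableSpace Ω] {μ : Measure Ω}
    {f : ℕ → Ω → ι → ℝ} {c : ι → ℝ}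
    (hf : ∀ i, TendstoInMeasure μ (fun n ω => f n ω i) atTop fun _ => c i) :
    TendstoInMeasure μ f atTop fun _ => c := by
  rw [tendstoInMeasure_iff_dist]
  intro ε hε
  have coordinate (i : ι) := tendstoInMeasure_iff_dist.1 (hf i) ε hε
  have sum_tendsto := tendsto_finsetSum univ fun i _ => coordinate i
  rw [sum_const_zero] at sum_tendsto
  refine tendsto_of_tendsto_of_tendsto_of_le_of_le tendsto_const_nhds sum_tendsto
    (fun _ => zero_le) fun n => ?_
  refine (measure_mono fun ω hω => ?_).trans (measure_biUnion_finset_le univ _)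
  simp only [Set.mem_ofPred_eq, Set.mem_iUnion, mem_univ, exists_prop, true_and] at hω ⊢
  contrapose! hω
  exact (dist_pi_lt_iff hε).2 hω

variable {Ω H S : Type*} {Hs : ℕ → Ω → H} {Ss : ℕ → Ω → S}

lemma IsDrivenBy.measurable_of_factorsThrough_past [MeasurableSpace Ω] {μ : Measure Ω}
    [Finite H] [Finite S] {Q : H → S → ℝ} {step : H → S → H} {β : Type*} [MeasurableSpace β]
    (hD : IsDrivenBy μ Q step Hs Ss) {t : ℕ} {F : Ω → β} (hF : F.FactorsThrough (past Hs Ss t)) :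
    Measurable F := by
  rcases isEmpty_or_nonempty Ω with _ | ⟨⟨ω₀⟩⟩
  · exact measurable_of_empty F
  have : Nonempty β := ⟨F ω₀⟩
  obtain ⟨G, rfl⟩ := (Function.factorsThrough_iff F).1 hF
  let _ : MeasurableSpace (H × (Fin t → S)) := ⊤
  exact (measurable_of_finite G).comp (measurable_to_countable' (hD.measurableSet_past_eq t))

section Counts

variable [DecidableEq H]

/-- The number of visits to the state `h` before time `n`. -/
def stateCount (Hs : ℕ → Ω → H) (Ss : ℕ → Ω → S) (h : H) : ℕ → Ω → ℝ :=
  additiveFunctional Hs Ss fun h' _ => if h' = h then 1 else 0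

lemma stateCount_nonneg (h : H) (n : ℕ) (ω : Ω) : 0 ≤ stateCount Hs Ss h n ω := by
  unfold stateCount additiveFunctional
  positivity

lemma IsDrivenBy.measurable_stateFrequency [MeasurableSpace Ω] {μ : Measure Ω} [Finite H]
    [Finite S] {Q : H → S → ℝ} {step : H → S → H} (hD : IsDrivenBy μ Q step Hs Ss) (n : ℕ) :
    Measurable fun ω h => stateCount Hs Ss h n ω / n :=
  measurable_pi_lambda _ fun _ =>
    (hD.measurable_of_factorsThrough_past
      (hD.additiveFunctional_factorsThrough_past _ le_rfl)).div_const _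

variable [DecidableEq S]

/-- The number of times before `n` at which the symbol `s` is emitted from the state `h`. -/
def pairCount (Hs : ℕ → Ω → H) (Ss : ℕ → Ω → S) (h : H) (s : S) : ℕ → Ω → ℝ :=
  additiveFunctional Hs Ss fun h' s' => if h' = h ∧ s' = s then 1 else 0

lemma pairCount_nonneg (h : H) (s : S) (n : ℕ) (ω : Ω) : 0 ≤ pairCount Hs Ss h s n ω := by
  unfold pairCount additiveFunctional
  positivity

variable [Fintype S]

lemma sum_pairCount (h : H) (n : ℕ) (ω : Ω) :
    ∑ s, pairCount Hs Ss h s n ω = stateCount Hs Ss h n ω := by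
  simp only [pairCount, stateCount, additiveFunctional]
  rw [sum_comm]
  simp only [ite_and, sum_ite_irrel, sum_ite_eq, mem_univ, if_true, sum_const_zero]

variable [Fintype H]

/-- Pearson's χ² statistic of the pair counts up to time `n` against the transition kernel `Q`,
conditionally on the state counts; unvisited states contribute `x / 0 = 0`. -/
noncomputable def pearsonStatistic (Q : H → S → ℝ) (Hs : ℕ → Ω → H) (Ss : ℕ → Ω → S) (n : ℕ)
    (ω : Ω) : ℝ :=
  ∑ h, ∑ s, (pairCount Hs Ss h s n ω - stateCount Hs Ss h n ω * Q h s) ^ 2 /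
    (stateCount Hs Ss h n ω * Q h s)

end Counts

variable [Fintype S]

/-- The linear map `x ↦ (h ↦ ∑ₛ √Q(h,s) x(h,s))`, whose kernel contains the normalized
fluctuations of the pair counts. -/
noncomputable def sqrtKernelPairing (Q : H → S → ℝ) : EuclideanSpace ℝ (H × S) →ₗ[ℝ] (H → ℝ) where
  toFun x h := ∑ s, √(Q h s) * x (h, s)
  map_add' x y := by
    ext h
    simp [mul_add, sum_add_distrib]
  map_smul' c x := by
    ext h
    simp [mul_sum, mul_left_comm]

/-- The space on which the limiting Gaussian vector of the normalized pair counts lives. -/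
noncomputable abbrev fluctuationSpace (Q : H → S → ℝ) :
    Submodule ℝ (EuclideanSpace ℝ (H × S)) :=
  LinearMap.ker (sqrtKernelPairing Q)

lemma sum_sqrt_mul_fluctuation {Q : H → S → ℝ} (θ : fluctuationSpace Q) (h : H) :
    ∑ s, √(Q h s) * θ.1 (h, s) = 0 :=
  congrFun (LinearMap.mem_ker.1 θ.2) h

lemma sum_kernel_mul_fluctuation {Q : H → S → ℝ} (π : H → ℝ) (θ : fluctuationSpace Q) (h : H) :
    ∑ s, Q h s * (θ.1 (h, s) / (√(π h) * √(Q h s))) = 0 := by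
  have term (s : S) : Q h s * (θ.1 (h, s) / (√(π h) * √(Q h s))) =
      √(Q h s) * θ.1 (h, s) / √(π h) := by
    rw [mul_comm √(π h), ← div_div, mul_div_assoc', mul_div_assoc', mul_div_right_comm,
      Real.div_sqrt]
  simp only [term, ← sum_div, sum_sqrt_mul_fluctuation, zero_div]

variable [Fintype H]

lemma isOpen_sum_weighted_sq_lt (Q : H → S → ℝ) (π : H → ℝ) (I : ℝ) :
    IsOpen {z : fluctuationSpace Q × (H → ℝ) |
      (∀ h, 0 < z.2 h) ∧ ∑ h, ∑ s, z.1.1 (h, s) ^ 2 * π h / z.2 h < I} := by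
  have isOpen_pos : IsOpen {z : fluctuationSpace Q × (H → ℝ) | ∀ h, 0 < z.2 h} := by
    simp only [Set.ofPred_forall]
    exact isOpen_iInter_of_finite fun h => isOpen_lt continuous_const (by fun_prop)
  have continuousOn : ContinuousOn
      (fun z : fluctuationSpace Q × (H → ℝ) => ∑ h, ∑ s, z.1.1 (h, s) ^ 2 * π h / z.2 h)
      {z | ∀ h, 0 < z.2 h} :=
    continuousOn_finsetSum _ fun h _ => continuousOn_finsetSum _ fun s _ =>
      ContinuousOn.div (by fun_prop) (by fun_prop) fun z hz => (hz h).ne'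
  exact continuousOn.isOpen_inter_preimage isOpen_pos isOpen_Iio

namespace IsErgodicKernel

variable {Q : H → S → ℝ} {π : H → ℝ} {step : H → S → H}

lemma sqrt_kernel_pos (hK : IsErgodicKernel Q π step) (h : H) (s : S) : 0 < √(Q h s) :=
  Real.sqrt_pos.2 (hK.kernel_pos h s)

lemma sqrt_stationary_pos (hK : IsErgodicKernel Q π step) (h : H) : 0 < √(π h) :=
  Real.sqrt_pos.2 (hK.stationary_pos h)

lemma finrank_fluctuationSpace (hK : IsErgodicKernel Q π step) :
    finrank ℝ (fluctuationSpace Q) = Fintype.card H * (Fintype.card S - 1) := by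
  have surjective : Function.Surjective (sqrtKernelPairing Q) := by
    intro y
    refine ⟨WithLp.toLp 2 fun p => √(Q p.1 p.2) * y p.1, funext fun h => ?_⟩
    simp only [sqrtKernelPairing, LinearMap.coe_mk, AddHom.coe_mk, ← mul_assoc,
      Real.mul_self_sqrt (hK.kernel_pos _ _).le, ← sum_mul, hK.sum_kernel, one_mul]
  have rank_nullity := LinearMap.finrank_range_add_finrank_ker (sqrtKernelPairing Q)
  rw [LinearMap.range_eq_top.2 surjective, finrank_top, finrank_fintype_fun_eq_card,
    finrank_euclideanSpace, Fintype.card_prod] at rank_nullity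
  rw [Nat.mul_sub, mul_one]
  exact (Nat.sub_eq_of_eq_add' rank_nullity.symm).symm

lemma stationaryMean_fluctuation_sq (hK : IsErgodicKernel Q π step) (θ : fluctuationSpace Q) :
    stationaryMean Q π (fun h s => (θ.1 (h, s) / (√(π h) * √(Q h s))) ^ 2) = ‖θ‖ ^ 2 := by
  rw [Submodule.coe_norm, EuclideanSpace.norm_sq_eq, Fintype.sum_prod_type, stationaryMean]
  refine sum_congr rfl fun h _ => (mul_sum ..).trans (sum_congr rfl fun s _ => ?_)
  have := hK.kernel_pos h s
  have := hK.stationary_pos h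
  rw [div_pow, mul_pow, Real.sq_sqrt (by positivity), Real.sq_sqrt (by positivity),
    Real.norm_eq_abs, sq_abs]
  field_simp

variable [DecidableEq H] [DecidableEq S]

/-- The contribution to the normalized fluctuation of emitting `s` from `h`:
`(𝟙{(h,s) = (h',s')} - 𝟙{h = h'} Q(h',s')) / √(π(h') Q(h',s'))` in the coordinate `(h',s')`. -/
noncomputable def increment (hK : IsErgodicKernel Q π step) (h : H) (s : S) :
    fluctuationSpace Q :=
  ⟨WithLp.toLp 2 fun p => (if h = p.1 then (if s = p.2 then 1 else 0) - Q p.1 p.2 else 0) /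
      (√(π p.1) * √(Q p.1 p.2)), by
    ext h'
    by_cases hh : h = h'
    · subst hh
      have cancel (s' : S) (a : ℝ) : √(Q h s') * (a / (√(π h) * √(Q h s'))) = a / √(π h) := by
        have := hK.sqrt_kernel_pos h s'
        have := hK.sqrt_stationary_pos h
        field_simp
      simp [sqrtKernelPairing, cancel, ← sum_div, hK.sum_kernel]
    · simp [sqrtKernelPairing, hh]⟩

lemma inner_increment (hK : IsErgodicKernel Q π step) (h : H) (s : S) (θ : fluctuationSpace Q) :
    inner ℝ (hK.increment h s) θ = θ.1 (h, s) / (√(π h) * √(Q h s)) := by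
  have term (s' : S) : θ.1 (h, s') * (((if s = s' then 1 else 0) - Q h s') /
      (√(π h) * √(Q h s'))) = (if s = s' then θ.1 (h, s') / (√(π h) * √(Q h s')) else 0) -
        √(Q h s') * θ.1 (h, s') / √(π h) := by
    have := hK.sqrt_kernel_pos h s'
    have := hK.sqrt_stationary_pos h
    have sq_eq : Q h s' = √(Q h s') ^ 2 := (Real.sq_sqrt (hK.kernel_pos h s').le).symm
    generalize √(Q h s') = q at *
    rw [sq_eq]
    split_ifs
    · field_simp
    · field_simp
      ring
  rw [Submodule.coe_inner, PiLp.inner_apply, Fintype.sum_prod_type, Fintype.sum_eq_single h]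
  · simp only [increment, if_true, RCLike.inner_apply, conj_trivial, term, sum_sub_distrib,
      ← sum_div, sum_sqrt_mul_fluctuation, sum_ite_eq, mem_univ, zero_div, sub_zero]
  · intro h' hh
    simp [increment, hh.symm]

/-- The vector of normalized fluctuations of the pair counts up to time `n`. -/
noncomputable def normalizedFluctuation (hK : IsErgodicKernel Q π step) (Hs : ℕ → Ω → H)
    (Ss : ℕ → Ω → S) (n : ℕ) (ω : Ω) : fluctuationSpace Q :=
  (√n)⁻¹ • additiveFunctional Hs Ss hK.increment n ω

lemma normalizedFluctuation_apply (hK : IsErgodicKernel Q π step) (n : ℕ) (ω : Ω) (h : H) (s : S) :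
    (hK.normalizedFluctuation Hs Ss n ω).1 (h, s) =
      (√n)⁻¹ * ((pairCount Hs Ss h s n ω - stateCount Hs Ss h n ω * Q h s) /
        (√(π h) * √(Q h s))) := by
  simp only [normalizedFluctuation, additiveFunctional, pairCount, stateCount, Submodule.coe_smul,
    PiLp.smul_apply, smul_eq_mul, Submodule.coe_sum, WithLp.ofLp_sum, Finset.sum_apply, sum_mul,
    ← sum_sub_distrib, sum_div]
  congr 1
  refine sum_congr rfl fun t _ => ?_
  by_cases hh : Hs t ω = h <;> simp [increment, hh]

lemma inner_normalizedFluctuation (hK : IsErgodicKernel Q π step) (n : ℕ) (ω : Ω)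
    (θ : fluctuationSpace Q) :
    inner ℝ (hK.normalizedFluctuation Hs Ss n ω) θ =
      additiveFunctional Hs Ss (fun h s => θ.1 (h, s) / (√(π h) * √(Q h s))) n ω * (√n)⁻¹ := by
  rw [normalizedFluctuation, Submodule.coe_inner, Submodule.coe_smul, real_inner_smul_left,
    mul_comm, additiveFunctional, Submodule.coe_sum, sum_inner]
  exact congrArg (· * (√n)⁻¹) (sum_congr rfl fun t _ => hK.inner_increment _ _ θ)

lemma pearsonStatistic_eq (hK : IsErgodicKernel Q π step) {n : ℕ} (hn : 0 < n) (ω : Ω) :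
    pearsonStatistic Q Hs Ss n ω =
      ∑ h, ∑ s, (hK.normalizedFluctuation Hs Ss n ω).1 (h, s) ^ 2 * π h /
        (stateCount Hs Ss h n ω / n) := by
  refine sum_congr rfl fun h _ => sum_congr rfl fun s _ => ?_
  have := hK.kernel_pos h s
  have := hK.stationary_pos h
  have : (0 : ℝ) < n := mod_cast hn
  rw [normalizedFluctuation_apply, mul_pow, div_pow, mul_pow, inv_pow,
    Real.sq_sqrt (by positivity), Real.sq_sqrt (by positivity), Real.sq_sqrt (by positivity)]
  field_simp

end IsErgodicKernel

namespace IsDrivenBy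

variable [MeasurableSpace Ω] {μ : Measure Ω} {Q : H → S → ℝ} {π : H → ℝ}
  {step : H → S → H} [DecidableEq H]

lemma measurable_normalizedFluctuation [DecidableEq S] (hK : IsErgodicKernel Q π step)
    (hD : IsDrivenBy μ Q step Hs Ss) (n : ℕ) :
    Measurable (hK.normalizedFluctuation Hs Ss n) :=
  hD.measurable_of_factorsThrough_past (t := n) fun _ _ h =>
    congrArg ((√n)⁻¹ • ·) (hD.additiveFunctional_factorsThrough_past _ le_rfl h)

variable [IsProbabilityMeasure μ]

lemma tendstoInMeasure_stateCount_div (hK : IsErgodicKernel Q π step)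
    (hD : IsDrivenBy μ Q step Hs Ss) (h : H) :
    TendstoInMeasure μ (fun n ω => stateCount Hs Ss h n ω / n) atTop fun _ => π h := by
  have mean_eq : stationaryMean Q π (fun h' _ => if h' = h then 1 else 0) = π h := by
    simp [stationaryMean, hK.sum_kernel]
  rw [← mean_eq]
  exact hD.tendstoInMeasure_average hK _

variable [DecidableEq S]

lemma tendstoInMeasure_pairCount_div (hK : IsErgodicKernel Q π step)
    (hD : IsDrivenBy μ Q step Hs Ss) (h : H) (s : S) :
    TendstoInMeasure μ (fun n ω => pairCount Hs Ss h s n ω / n) atTop fun _ => π h * Q h s := by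
  have mean_eq : stationaryMean Q π (fun h' s' => if h' = h ∧ s' = s then 1 else 0) =
      π h * Q h s := by
    simp [stationaryMean, ite_and]
  rw [← mean_eq]
  exact hD.tendstoInMeasure_average hK _

lemma tendsto_charFun_normalizedFluctuation (hK : IsErgodicKernel Q π step)
    (hD : IsDrivenBy μ Q step Hs Ss) (θ : fluctuationSpace Q) :
    Tendsto (fun n => charFun (μ.map (hK.normalizedFluctuation Hs Ss n)) θ) atTop
      (𝓝 (charFun (stdGaussian (fluctuationSpace Q)) θ)) := by
  have clt := hD.tendsto_integral_cexp_additiveFunctional hK (sum_kernel_mul_fluctuation π θ)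
  rw [hK.stationaryMean_fluctuation_sq] at clt
  rw [charFun_stdGaussian]
  convert clt using 2 with n
  · rw [charFun_apply, integral_map (hD.measurable_normalizedFluctuation hK n).aemeasurable
      (by fun_prop)]
    simp only [hK.inner_normalizedFluctuation]
  · push_cast
    rfl

lemma tendstoInDistribution_normalizedFluctuation (hK : IsErgodicKernel Q π step)
    (hD : IsDrivenBy μ Q step Hs Ss) :
    TendstoInDistribution (hK.normalizedFluctuation Hs Ss) atTop id (fun _ => μ)
      (stdGaussian (fluctuationSpace Q)) where
  forall_aemeasurable n := (hD.measurable_normalizedFluctuation hK n).aemeasurable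
  tendsto := ProbabilityMeasure.tendsto_of_tendsto_charFun fun θ => by
    simpa using hD.tendsto_charFun_normalizedFluctuation hK θ

lemma tendstoInDistribution_fluctuation_frequency (hK : IsErgodicKernel Q π step)
    (hD : IsDrivenBy μ Q step Hs Ss) :
    TendstoInDistribution
      (fun n ω => (hK.normalizedFluctuation Hs Ss n ω, fun h => stateCount Hs Ss h n ω / n))
      atTop (fun x => (x, π)) (fun _ => μ) (stdGaussian (fluctuationSpace Q)) :=
  (hD.tendstoInDistribution_normalizedFluctuation hK).prodMk_of_tendstoInMeasure_const
    _ _ _ (tendstoInMeasure_pi (hD.tendstoInMeasure_stateCount_div hK))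
    fun n => (hD.measurable_stateFrequency n).aemeasurable

lemma stdGaussian_norm_sq_lt_le_liminf (hK : IsErgodicKernel Q π step)
    (hD : IsDrivenBy μ Q step Hs Ss) (I : ℝ) :
    stdGaussian (fluctuationSpace Q) {x | ‖x‖ ^ 2 < I} ≤
      liminf (fun n => μ {ω | pearsonStatistic Q Hs Ss n ω < I}) atTop := by
  have joint := hD.tendstoInDistribution_fluctuation_frequency hK
  have open_event := isOpen_sum_weighted_sq_lt Q π I
  have portmanteau := ProbabilityMeasure.le_liminf_measure_open_of_tendsto joint.tendsto open_event
  simp only [ProbabilityMeasure.coe_mk] at portmanteau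
  rw [Measure.map_apply (by fun_prop) open_event.measurableSet] at portmanteau
  refine (measure_mono fun x hx => ?_).trans (portmanteau.trans (liminf_le_liminf ?_))
  · refine ⟨hK.stationary_pos, ?_⟩
    simpa [mul_div_cancel_right₀ _ (hK.stationary_pos _).ne', EuclideanSpace.norm_sq_eq,
      Fintype.sum_prod_type] using hx
  · filter_upwards [eventually_gt_atTop 0] with n hn
    rw [Measure.map_apply ((hD.measurable_normalizedFluctuation hK n).prodMk
      (hD.measurable_stateFrequency n)) open_event.measurableSet]
    refine measure_mono fun ω hω => ?_
    simpa only [Set.mem_ofPred_eq, hK.pearsonStatistic_eq hn] using hω.2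

theorem eventually_lt_measureReal_pearsonStatistic_lt (hK : IsErgodicKernel Q π step)
    (hD : IsDrivenBy μ Q step Hs Ss) {I c : ℝ}
    (hc : c < (chiSq ↑(Fintype.card H * (Fintype.card S - 1))).real (Set.Iic I)) :
    ∀ᶠ n in atTop, c < μ.real {ω | pearsonStatistic Q Hs Ss n ω < I} := by
  rcases lt_or_ge c 0 with hc0 | hc0
  · exact .of_forall fun n => hc0.trans_le measureReal_nonneg
  rw [← hK.finrank_fluctuationSpace] at hc
  have gaussian_lt := hc.trans_le (measureReal_chiSq_Iic_le I)
  have lt_liminf := ((ENNReal.ofReal_lt_iff_lt_toReal hc0 (measure_ne_top _ _)).2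
    gaussian_lt).trans_le (hD.stdGaussian_norm_sq_lt_le_liminf hK I)
  filter_upwards [eventually_lt_of_lt_liminf lt_liminf] with n hn
  exact (ENNReal.ofReal_lt_iff_lt_toReal hc0 (measure_ne_top _ _)).1 hn

end IsDrivenBy

end Pearson

/-! ### Gibbs' inequality and its conditional form -/

section Gibbs

variable {W : Type*} [Fintype W]

lemma sub_le_mul_log_div {a b : ℝ} (ha : 0 ≤ a) (hb : 0 ≤ b) (hab : 0 < a → 0 < b) :
    a - b ≤ a * Real.log (a / b) := by
  rcases ha.eq_or_lt with rfl | ha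
  · simpa using hb
  have hb := hab ha
  have hlog := Real.one_sub_inv_le_log_of_pos (div_pos ha hb)
  calc a - b = a * (1 - (a / b)⁻¹) := by field_simp
    _ ≤ a * Real.log (a / b) := mul_le_mul_of_nonneg_left hlog ha.le

lemma eq_of_mul_log_div_le_sub {a b : ℝ} (ha : 0 ≤ a) (hb : 0 ≤ b) (hab : 0 < a → 0 < b)
    (h : a * Real.log (a / b) ≤ a - b) : a = b := by
  rcases ha.eq_or_lt with rfl | ha
  · exact hb.antisymm (by simpa using h)
  have hb := hab ha
  by_contra hne
  have hratio : b / a ≠ 1 := fun heq => hne ((div_eq_one_iff_eq ha.ne').1 heq).symm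
  have hlog := Real.log_lt_sub_one_of_pos (div_pos hb ha) hratio
  have hstrict : a - b < a * Real.log (a / b) :=
    calc a - b = a * -(b / a - 1) := by field_simp; ring
      _ < a * -Real.log (b / a) := mul_lt_mul_of_pos_left (neg_lt_neg hlog) ha
      _ = a * Real.log (a / b) := by rw [← Real.log_inv, inv_div]
  exact hstrict.not_ge h

variable {p q : W → ℝ}

lemma klfin_nonneg (hp : ∀ w, 0 ≤ p w) (hq : ∀ w, 0 ≤ q w) (hpq : ∀ w, 0 < p w → 0 < q w)
    (hsum : ∑ w, q w ≤ ∑ w, p w) : 0 ≤ KLfin p q :=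
  calc 0 ≤ ∑ w, (p w - q w) := by rw [sum_sub_distrib]; exact sub_nonneg.2 hsum
    _ ≤ KLfin p q := sum_le_sum fun w _ => sub_le_mul_log_div (hp w) (hq w) (hpq w)

lemma eq_of_klfin_nonpos (hp : ∀ w, 0 ≤ p w) (hq : ∀ w, 0 ≤ q w)
    (hpq : ∀ w, 0 < p w → 0 < q w) (hsum : ∑ w, q w ≤ ∑ w, p w) (hKL : KLfin p q ≤ 0) :
    p = q := by
  have hle : ∀ w ∈ univ, p w - q w ≤ p w * Real.log (p w / q w) :=
    fun w _ => sub_le_mul_log_div (hp w) (hq w) (hpq w)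
  have hsum_sub : 0 ≤ ∑ w, (p w - q w) := by
    rw [sum_sub_distrib]
    exact sub_nonneg.2 hsum
  have hsum_eq := (sum_le_sum hle).antisymm (hKL.trans hsum_sub)
  funext w
  exact eq_of_mul_log_div_le_sub (hp w) (hq w) (hpq w)
    ((sum_eq_sum_iff_of_le hle).1 hsum_eq w (mem_univ w)).ge

lemma klfin_le_sum_sq_div (hp : ∀ w, 0 ≤ p w) (hq : ∀ w, 0 ≤ q w)
    (hpq : ∀ w, 0 < p w → 0 < q w) (hsum : ∑ w, p w = ∑ w, q w) :
    KLfin p q ≤ ∑ w, (p w - q w) ^ 2 / q w := by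
  have hterm : ∀ w, p w * Real.log (p w / q w) ≤ (p w - q w) ^ 2 / q w + (p w - q w) := by
    intro w
    rcases (hp w).eq_or_lt with hpw | hpw
    · rcases (hq w).eq_or_lt with hqw | hqw
      · simp [← hpw, ← hqw]
      · rw [← hpw]
        exact le_of_eq (by field_simp; ring)
    · have hqw := hpq w hpw
      calc p w * Real.log (p w / q w) ≤ p w * (p w / q w - 1) :=
            mul_le_mul_of_nonneg_left (Real.log_le_sub_one_of_pos (div_pos hpw hqw)) hpw.le
        _ = (p w - q w) ^ 2 / q w + (p w - q w) := by field_simp; ring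
  calc KLfin p q ≤ ∑ w, ((p w - q w) ^ 2 / q w + (p w - q w)) := sum_le_sum fun w _ => hterm w
    _ = ∑ w, (p w - q w) ^ 2 / q w := by rw [sum_add_distrib, sum_sub_distrib, hsum]; ring

end Gibbs

section ConditionalGibbs

variable {W A Y : Type*} [Fintype W] [DecidableEq A] {p : W → ℝ}

lemma pushf_nonneg (hp : ∀ w, 0 ≤ p w) (f : W → A) (a : A) :
    0 ≤ pushf f p a :=
  sum_nonneg fun w _ => ite_nonneg (hp w) le_rfl

lemma le_pushf_apply (hp : ∀ w, 0 ≤ p w) (f : W → A) (w : W) :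
    p w ≤ pushf f p (f w) := by
  have h := single_le_sum (f := fun v => if f v = f w then p v else 0)
    (fun v _ => ite_nonneg (hp v) le_rfl) (mem_univ w)
  simpa [pushf] using h

lemma exists_eq_of_pushf_pos {f : W → A} {a : A} (h : 0 < pushf f p a) : ∃ w, f w = a := by
  by_contra! hne
  simp [pushf, hne] at h

lemma continuous_pushf (f : W → A) (a : A) : Continuous fun q : W → ℝ => pushf f q a := by
  refine continuous_finsetSum _ fun w _ => ?_
  split_ifs
  exacts [continuous_apply w, continuous_const]

lemma pushf_apply_of_injective {f : W → A} (hf : Function.Injective f) (w : W) :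
    pushf f p (f w) = p w := by
  simp [pushf, hf.eq_iff]

lemma sum_pushf_mul [Fintype A] (f : W → A) (φ : A → ℝ) :
    ∑ a, pushf f p a * φ a = ∑ w, p w * φ (f w) := by
  simp only [pushf, sum_mul, ite_mul, zero_mul]
  rw [sum_comm]
  simp

lemma sum_pushf [Fintype A] (f : W → A) : ∑ a, pushf f p a = ∑ w, p w := by
  simpa using sum_pushf_mul (p := p) f fun _ => 1

lemma sum_pushf_prodMk [Fintype Y] [DecidableEq Y] (f : W → A) (ℓ : W → Y)
    (a : A) : ∑ y, pushf (fun w => (f w, ℓ w)) p (a, y) = pushf f p a := by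
  simp only [pushf, Prod.mk.injEq, ite_and]
  rw [sum_comm]
  refine sum_congr rfl fun w _ => ?_
  split_ifs <;> simp

variable {f : W → A} {ℓ : W → Y} {u : W → ℝ} {replace : W → Y → W}

/-- The weight of the pair `(a, y)` under the `f`-marginal of `p` followed by the kernel that `u`
induces on the values of `(f, ℓ)`; it is `0` on pairs that `(f, ℓ)` does not attain. -/
noncomputable def marginalKernelWeight (f : W → A) (ℓ : W → Y) (u p : W → ℝ) (t : A × Y) : ℝ :=
  pushf f p t.1 * Function.extend (fun w => (f w, ℓ w)) u 0 t

lemma marginalKernelWeight_apply (hu : u.FactorsThrough fun w => (f w, ℓ w)) (w : W) :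
    marginalKernelWeight f ℓ u p (f w, ℓ w) = pushf f p (f w) * u w := by
  rw [marginalKernelWeight, hu.extend_apply 0 w]

lemma marginalKernelWeight_nonneg (hp : ∀ w, 0 ≤ p w) (hu : u.FactorsThrough fun w => (f w, ℓ w))
    (hu_pos : ∀ w, 0 < u w) (t : A × Y) : 0 ≤ marginalKernelWeight f ℓ u p t := by
  refine mul_nonneg (pushf_nonneg hp _ _) ?_
  by_cases ht : ∃ w, (f w, ℓ w) = t
  · obtain ⟨w, rfl⟩ := ht
    rw [hu.extend_apply 0 w]
    exact (hu_pos w).le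
  · rw [Function.extend_apply' _ _ _ ht]
    rfl

lemma marginalKernelWeight_pos [Finite Y] [DecidableEq Y] (hp : ∀ w, 0 ≤ p w)
    (hu : u.FactorsThrough fun w => (f w, ℓ w)) (hu_pos : ∀ w, 0 < u w) (t : A × Y)
    (ht : 0 < pushf (fun w => (f w, ℓ w)) p t) :
    0 < marginalKernelWeight f ℓ u p t := by
  cases nonempty_fintype Y
  obtain ⟨w, rfl⟩ := exists_eq_of_pushf_pos ht
  rw [marginalKernelWeight_apply hu]
  refine mul_pos (ht.trans_le ?_) (hu_pos w)
  rw [← sum_pushf_prodMk f ℓ]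
  exact single_le_sum (f := fun y => pushf (fun w => (f w, ℓ w)) p (f w, y))
    (fun y _ => pushf_nonneg hp _ _) (mem_univ (ℓ w))

variable [Fintype Y]

lemma sum_marginalKernelWeight_le [Fintype A] (hp : ∀ w, 0 ≤ p w)
    (hu : u.FactorsThrough fun w => (f w, ℓ w)) (hf : ∀ w y, f (replace w y) = f w)
    (hℓ : ∀ w y, ℓ (replace w y) = y) (hu_sum : ∀ w, ∑ y, u (replace w y) ≤ 1) :
    ∑ t, marginalKernelWeight f ℓ u p t ≤ ∑ w, p w := by
  have hkernel : ∀ w, ∑ y, Function.extend (fun w => (f w, ℓ w)) u 0 (f w, y) ≤ 1 := by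
    intro w
    refine le_of_eq_of_le (sum_congr rfl fun y _ => ?_) (hu_sum w)
    rw [← hf w y, ← hu.extend_apply 0 (replace w y), hℓ]
  calc ∑ t, marginalKernelWeight f ℓ u p t
      = ∑ a, pushf f p a * ∑ y, Function.extend (fun w => (f w, ℓ w)) u 0 (a, y) := by
        simp only [marginalKernelWeight, Fintype.sum_prod_type, mul_sum]
    _ = ∑ w, p w * ∑ y, Function.extend (fun w => (f w, ℓ w)) u 0 (f w, y) := sum_pushf_mul f _
    _ ≤ ∑ w, p w := sum_le_sum fun w _ => mul_le_of_le_one_right (hp w) (hkernel w)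

variable [DecidableEq Y]

lemma klfin_pushf_marginalKernelWeight [Fintype A]
    (hu : u.FactorsThrough fun w => (f w, ℓ w)) :
    KLfin (pushf (fun w => (f w, ℓ w)) p) (marginalKernelWeight f ℓ u p) =
      ∑ w, p w * Real.log (pushf (fun w => (f w, ℓ w)) p (f w, ℓ w) / (pushf f p (f w) * u w)) := by
  rw [KLfin, sum_pushf_mul]
  simp only [marginalKernelWeight_apply hu]

lemma sum_mul_log_pushf_div_nonneg [Finite A] (hp : ∀ w, 0 ≤ p w)
    (hu : u.FactorsThrough fun w => (f w, ℓ w)) (hu_pos : ∀ w, 0 < u w)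
    (hf : ∀ w y, f (replace w y) = f w) (hℓ : ∀ w y, ℓ (replace w y) = y)
    (hu_sum : ∀ w, ∑ y, u (replace w y) ≤ 1) :
    0 ≤ ∑ w, p w *
      Real.log (pushf (fun w => (f w, ℓ w)) p (f w, ℓ w) / (pushf f p (f w) * u w)) := by
  cases nonempty_fintype A
  rw [← klfin_pushf_marginalKernelWeight hu]
  exact klfin_nonneg (pushf_nonneg hp _) (marginalKernelWeight_nonneg hp hu hu_pos)
    (marginalKernelWeight_pos hp hu hu_pos)
    ((sum_marginalKernelWeight_le hp hu hf hℓ hu_sum).trans_eq (sum_pushf _).symm)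

lemma pushf_eq_mul_of_sum_mul_log_nonpos [Finite A] (hp : ∀ w, 0 ≤ p w)
    (hu : u.FactorsThrough fun w => (f w, ℓ w)) (hu_pos : ∀ w, 0 < u w)
    (hf : ∀ w y, f (replace w y) = f w) (hℓ : ∀ w y, ℓ (replace w y) = y)
    (hu_sum : ∀ w, ∑ y, u (replace w y) ≤ 1)
    (hnonpos : ∑ w, p w * Real.log
      (pushf (fun w => (f w, ℓ w)) p (f w, ℓ w) / (pushf f p (f w) * u w)) ≤ 0) (w : W) :
    pushf (fun w => (f w, ℓ w)) p (f w, ℓ w) = pushf f p (f w) * u w := by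
  cases nonempty_fintype A
  rw [← klfin_pushf_marginalKernelWeight hu] at hnonpos
  have heq := eq_of_klfin_nonpos (pushf_nonneg hp _) (marginalKernelWeight_nonneg hp hu hu_pos)
    (marginalKernelWeight_pos hp hu hu_pos)
    ((sum_marginalKernelWeight_le hp hu hf hℓ hu_sum).trans_eq (sum_pushf _).symm) hnonpos
  rw [heq, marginalKernelWeight_apply hu]

end ConditionalGibbs

/-! ### Blocks as histories followed by a joint symbol -/

section Blocks

variable {𝒳 : Type*} {m k : ℕ}

/-- The first `k` columns of a configuration of `(k+1)`-blocks. -/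
def blockHist (w : MBlk 𝒳 m (k + 1)) : MBlk 𝒳 m k := fun l => Fin.init (w l)

/-- The last column of a configuration of `(k+1)`-blocks. -/
def blockLast (w : MBlk 𝒳 m (k + 1)) : MSym 𝒳 m := fun l => w l (Fin.last k)

/-- The configuration of `(k+1)`-blocks with history `h` and last column `s`. -/
def blockSnoc (h : MBlk 𝒳 m k) (s : MSym 𝒳 m) : MBlk 𝒳 m (k + 1) := fun l => Fin.snoc (h l) (s l)

@[simp] lemma blockHist_blockSnoc (h : MBlk 𝒳 m k) (s : MSym 𝒳 m) :
    blockHist (blockSnoc h s) = h := by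
  funext l
  simp [blockHist, blockSnoc]

@[simp] lemma blockLast_blockSnoc (h : MBlk 𝒳 m k) (s : MSym 𝒳 m) :
    blockLast (blockSnoc h s) = s := by
  funext l
  simp [blockLast, blockSnoc]

@[simp] lemma blockSnoc_blockHist_blockLast (w : MBlk 𝒳 m (k + 1)) :
    blockSnoc (blockHist w) (blockLast w) = w := by
  funext l
  exact Fin.snoc_init_self (w l)

/-- A configuration of `(k+1)`-blocks is a history together with a last column. -/
@[simps apply]
def blockEquiv (𝒳 : Type*) (m k : ℕ) : MBlk 𝒳 m (k + 1) ≃ MBlk 𝒳 m k × MSym 𝒳 m where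
  toFun w := (blockHist w, blockLast w)
  invFun x := blockSnoc x.1 x.2
  left_inv := blockSnoc_blockHist_blockLast
  right_inv x := by simp

lemma block_eq_iff {a b : Blk 𝒳 (k + 1)} :
    a = b ↔ Fin.init a = Fin.init b ∧ a (Fin.last k) = b (Fin.last k) := by
  refine ⟨by rintro rfl; exact ⟨rfl, rfl⟩, fun ⟨hinit, hlast⟩ => ?_⟩
  rw [← Fin.snoc_init_self a, ← Fin.snoc_init_self b, hinit, hlast]

/-- The variables conditioned on in the directed information from `i` to `j`: the history of node
`j` and the whole blocks of the nodes other than `i` and `j`. -/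
def condVars (i j : Fin m) (w : MBlk 𝒳 m (k + 1)) :
    Blk 𝒳 k × ({l : Fin m // l ≠ i ∧ l ≠ j} → Blk 𝒳 (k + 1)) :=
  (blockHist w j, fun l => w l)

/-- The last column with node `j` removed. -/
def lastOff (j : Fin m) (w : MBlk 𝒳 m (k + 1)) : {l : Fin m // l ≠ j} → 𝒳 :=
  fun l => blockLast w l

/-- Replace the last symbol of node `j`. -/
noncomputable def replaceLast (j : Fin m) (w : MBlk 𝒳 m (k + 1)) (y : 𝒳) : MBlk 𝒳 m (k + 1) :=
  blockSnoc (blockHist w) (Function.update (blockLast w) j y)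

/-- Replace the last symbols of all nodes but `j`. -/
noncomputable def replaceLastOff (j : Fin m) (w : MBlk 𝒳 m (k + 1)) (z : {l : Fin m // l ≠ j} → 𝒳) :
    MBlk 𝒳 m (k + 1) :=
  blockSnoc (blockHist w) ((Equiv.funSplitAt j 𝒳).symm (blockLast w j, z))

variable {i j : Fin m} {w w' : MBlk 𝒳 m (k + 1)}

lemma condVars_eq_iff : condVars i j w' = condVars i j w ↔
    Fin.init (w' j) = Fin.init (w j) ∧ ∀ l, l ≠ i → l ≠ j → w' l = w l := by
  simp only [condVars, blockHist, Prod.mk.injEq, funext_iff (α := Subtype _), Subtype.forall,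
    and_imp]

lemma condVars_prod_last_eq_iff :
    (condVars i j w', blockLast w' j) = (condVars i j w, blockLast w j) ↔
      w' j = w j ∧ ∀ l, l ≠ i → l ≠ j → w' l = w l := by
  rw [Prod.mk.injEq, condVars_eq_iff, block_eq_iff (a := w' j), blockLast, blockLast]
  tauto

lemma hist_prod_lastOff_eq_iff (hij : i ≠ j) :
    (blockHist w', lastOff j w') = (blockHist w, lastOff j w) ↔
      w' i = w i ∧ Fin.init (w' j) = Fin.init (w j) ∧ ∀ l, l ≠ i → l ≠ j → w' l = w l := by
  have hcoord : (blockHist w', lastOff j w') = (blockHist w, lastOff j w) ↔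
      Fin.init (w' j) = Fin.init (w j) ∧ ∀ l, l ≠ j → w' l = w l := by
    simp only [Prod.mk.injEq, funext_iff (α := Fin m), funext_iff (α := Subtype _), Subtype.forall,
      lastOff, blockLast, blockHist, block_eq_iff (k := k)]
    refine ⟨fun h => ⟨h.1 j, fun l hl => ⟨h.1 l, h.2 l hl⟩⟩, fun h => ⟨fun l => ?_, fun l hl =>
      (h.2 l hl).2⟩⟩
    rcases eq_or_ne l j with rfl | hl
    exacts [h.1, (h.2 l hl).1]
  rw [hcoord]
  refine ⟨fun h => ⟨h.2 i hij, h.1, fun l _ hl => h.2 l hl⟩, fun h => ⟨h.2.1, fun l hl => ?_⟩⟩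
  rcases eq_or_ne l i with rfl | hli
  exacts [h.1, h.2.2 l hli hl]

@[simp] lemma condVars_replaceLast (w : MBlk 𝒳 m (k + 1)) (y : 𝒳) :
    condVars i j (replaceLast j w y) = condVars i j w := by
  refine condVars_eq_iff.2 ⟨?_, fun l _ hl => ?_⟩
  · simp [replaceLast, blockSnoc, blockHist]
  · simp [replaceLast, blockSnoc, blockHist, blockLast, hl]

@[simp] lemma blockHist_replaceLast (w : MBlk 𝒳 m (k + 1)) (y : 𝒳) :
    blockHist (replaceLast j w y) = blockHist w := blockHist_blockSnoc _ _

@[simp] lemma blockLast_replaceLast (w : MBlk 𝒳 m (k + 1)) (y : 𝒳) :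
    blockLast (replaceLast j w y) = Function.update (blockLast w) j y := blockLast_blockSnoc _ _

@[simp] lemma lastOff_replaceLast (w : MBlk 𝒳 m (k + 1)) (y : 𝒳) :
    lastOff j (replaceLast j w y) = lastOff j w := by
  funext l
  simp [lastOff, l.2]

@[simp] lemma lastOff_replaceLastOff (w : MBlk 𝒳 m (k + 1)) (z : {l : Fin m // l ≠ j} → 𝒳) :
    lastOff j (replaceLastOff j w z) = z := by
  funext l
  simp [lastOff, replaceLastOff, l.2]

lemma injective_hist_lastOff_last :
    Function.Injective fun w : MBlk 𝒳 m (k + 1) => ((blockHist w, lastOff j w), blockLast w j) := by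
  intro w w' h
  simp only [Prod.mk.injEq] at h
  refine (blockEquiv 𝒳 m k).injective (Prod.ext h.1.1 (funext fun l => ?_))
  rcases eq_or_ne l j with rfl | hl
  exacts [h.2, congrFun h.1.2 ⟨l, hl⟩]

end Blocks

/-! ### Directed information and the transition kernel -/

section DirectedInformation

variable {𝒳 : Type*} [Fintype 𝒳] {m k : ℕ} {i j : Fin m}
  {Q : MBlk 𝒳 m k → MSym 𝒳 m → ℝ}

/-- The kernel `Q` with the next symbol of node `j` summed out. -/
noncomputable def sumOutNode (Q : MBlk 𝒳 m k → MSym 𝒳 m → ℝ) (j : Fin m) (h : MBlk 𝒳 m k)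
    (s : MSym 𝒳 m) : ℝ :=
  ∑ y, Q h (Function.update s j y)

lemma sumOutNode_congr {h : MBlk 𝒳 m k} {s s' : MSym 𝒳 m} (hs : ∀ l, l ≠ j → s l = s' l) :
    sumOutNode Q j h s = sumOutNode Q j h s' := by
  refine sum_congr rfl fun y _ => congrArg (Q h) (funext fun l => ?_)
  rcases eq_or_ne l j with rfl | hl
  · simp
  · simp [hl, hs l hl]

lemma sumOutNode_pos (hQ : ∀ h s, 0 < Q h s) (j : Fin m) (h : MBlk 𝒳 m k) (s : MSym 𝒳 m) :
    0 < sumOutNode Q j h s :=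
  sum_pos (fun _ _ => hQ _ _) ⟨s j, mem_univ _⟩

lemma sum_sumOutNode (h : MBlk 𝒳 m k) (x : 𝒳) :
    ∑ z, sumOutNode Q j h ((Equiv.funSplitAt j 𝒳).symm (x, z)) = ∑ s, Q h s := by
  have hupdate : ∀ (z : {l : Fin m // l ≠ j} → 𝒳) (y : 𝒳),
      Function.update ((Equiv.funSplitAt j 𝒳).symm (x, z)) j y =
        (Equiv.funSplitAt j 𝒳).symm (y, z) := by
    intro z y
    funext l
    rcases eq_or_ne l j with rfl | hl
    · simp
    · simp [hl]
  simp only [sumOutNode, hupdate]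
  rw [sum_comm, ← Fintype.sum_prod_type'
    (f := fun y z => Q h ((Equiv.funSplitAt j 𝒳).symm (y, z)))]
  exact (Equiv.funSplitAt j 𝒳).symm.sum_comp (Q h)

lemma MIsFactorizedAt.div_sumOutNode_congr (hfact : MIsFactorizedAt Q i j)
    (hQ : ∀ h s, 0 < Q h s) {h h' : MBlk 𝒳 m k} {s s' : MSym 𝒳 m} (hhj : h j = h' j)
    (hsj : s j = s' j) (hrest : ∀ l, l ≠ i → l ≠ j → h l = h' l ∧ s l = s' l) :
    Q h s / sumOutNode Q j h s = Q h' s' / sumOutNode Q j h' s' := by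
  obtain ⟨g₁, g₂, hg₁, hg₂, hg⟩ := hfact
  have hcancel : ∀ h s,
      Q h s / sumOutNode Q j h s = g₂ h s / ∑ y, g₂ h (Function.update s j y) := by
    intro h s
    have hsum : sumOutNode Q j h s = g₁ h s * ∑ y, g₂ h (Function.update s j y) := by
      rw [sumOutNode, mul_sum]
      refine sum_congr rfl fun y _ => ?_
      rw [hg, hg₁ h (Function.update s j y) s fun l hl => by simp [hl]]
    have hne : g₁ h s ≠ 0 := left_ne_zero_of_mul (hg h s ▸ (hQ h s).ne')
    rw [hsum, hg, mul_div_mul_left _ _ hne]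
  rw [hcancel, hcancel, hg₂ h h' s s' hhj hsj hrest]
  congr 1
  refine sum_congr rfl fun y _ => hg₂ _ _ _ _ hhj (by simp) fun l hli hlj => ?_
  simp [hlj, hrest l hli hlj]

variable [DecidableEq 𝒳] {p : MBlk 𝒳 m (k + 1) → ℝ}

lemma mMargA_eq_pushf (p : MBlk 𝒳 m (k + 1) → ℝ) (i j : Fin m) (w : MBlk 𝒳 m (k + 1)) :
    mMargA p i j w = pushf (condVars i j) p (condVars i j w) :=
  sum_congr rfl fun _ _ => if_congr condVars_eq_iff.symm rfl rfl

lemma mMargB_eq_pushf (p : MBlk 𝒳 m (k + 1) → ℝ) (i j : Fin m) (w : MBlk 𝒳 m (k + 1)) :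
    mMargB p i j w =
      pushf (fun w => (condVars i j w, blockLast w j)) p (condVars i j w, blockLast w j) :=
  sum_congr rfl fun _ _ => if_congr condVars_prod_last_eq_iff.symm rfl rfl

lemma mMargC_eq_pushf (hij : i ≠ j) (p : MBlk 𝒳 m (k + 1) → ℝ) (w : MBlk 𝒳 m (k + 1)) :
    mMargC p i j w =
      pushf (fun w => (blockHist w, lastOff j w)) p (blockHist w, lastOff j w) :=
  sum_congr rfl fun _ _ => if_congr (hist_prod_lastOff_eq_iff hij).symm rfl rfl

lemma le_mMargA (hp : ∀ w, 0 ≤ p w) (i j : Fin m) (w : MBlk 𝒳 m (k + 1)) :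
    p w ≤ mMargA p i j w :=
  (le_pushf_apply hp _ w).trans_eq (mMargA_eq_pushf p i j w).symm

lemma le_mMargB (hp : ∀ w, 0 ≤ p w) (i j : Fin m) (w : MBlk 𝒳 m (k + 1)) :
    p w ≤ mMargB p i j w :=
  (le_pushf_apply hp (fun w => (condVars i j w, blockLast w j)) w).trans_eq
    (mMargB_eq_pushf p i j w).symm

lemma le_mMargC (hij : i ≠ j) (hp : ∀ w, 0 ≤ p w) (w : MBlk 𝒳 m (k + 1)) :
    p w ≤ mMargC p i j w :=
  (le_pushf_apply hp (fun w => (blockHist w, lastOff j w)) w).trans_eq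
    (mMargC_eq_pushf hij p w).symm

lemma mMargA_replaceLast (p : MBlk 𝒳 m (k + 1) → ℝ) (i j : Fin m) (w : MBlk 𝒳 m (k + 1)) (y : 𝒳) :
    mMargA p i j (replaceLast j w y) = mMargA p i j w := by
  simp only [mMargA_eq_pushf, condVars_replaceLast]

lemma sum_mMargB_replaceLast (p : MBlk 𝒳 m (k + 1) → ℝ) (i j : Fin m) (w : MBlk 𝒳 m (k + 1)) :
    ∑ y, mMargB p i j (replaceLast j w y) = mMargA p i j w := by
  simp only [mMargA_eq_pushf, mMargB_eq_pushf, condVars_replaceLast, blockLast_replaceLast,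
    Function.update_self, sum_pushf_prodMk (condVars i j) (fun w => blockLast w j)]

lemma MIsFactorizedAt.sum_mul_log_mMargB_div_nonneg (hfact : MIsFactorizedAt Q i j)
    (hQ : ∀ h s, 0 < Q h s) (hp : ∀ w, 0 ≤ p w) :
    0 ≤ ∑ w, p w * Real.log (mMargB p i j w / (mMargA p i j w *
      (Q (blockHist w) (blockLast w) / sumOutNode Q j (blockHist w) (blockLast w)))) := by
  simp only [mMargA_eq_pushf, mMargB_eq_pushf]
  refine sum_mul_log_pushf_div_nonneg (ℓ := fun w => blockLast w j) (replace := replaceLast j) hp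
    (fun w w' hww' => ?_) (fun w => div_pos (hQ _ _) (sumOutNode_pos hQ _ _ _))
    condVars_replaceLast (fun w y => by simp) fun w => ?_
  · obtain ⟨hj, hrest⟩ := condVars_prod_last_eq_iff.1 hww'
    refine hfact.div_sumOutNode_congr hQ (congrArg Fin.init hj) (congrFun hj _) fun l hli hlj => ?_
    exact ⟨congrArg Fin.init (hrest l hli hlj), congrFun (hrest l hli hlj) _⟩
  · have hmass : ∀ y, sumOutNode Q j (blockHist w) (Function.update (blockLast w) j y) =
        sumOutNode Q j (blockHist w) (blockLast w) :=
      fun y => sumOutNode_congr fun l hl => by simp [hl]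
    simp only [blockHist_replaceLast, blockLast_replaceLast, hmass, ← sum_div]
    exact (div_self (sumOutNode_pos hQ _ _ _).ne').le

lemma sum_mul_log_mMargC_div_nonneg (hij : i ≠ j) (hQ : ∀ h s, 0 < Q h s)
    (hQ_sum : ∀ h, ∑ s, Q h s = 1) (hp : ∀ w, 0 ≤ p w) :
    0 ≤ ∑ w, p w * Real.log (mMargC p i j w /
      (pushf blockHist p (blockHist w) * sumOutNode Q j (blockHist w) (blockLast w))) := by
  simp only [mMargC_eq_pushf hij]
  refine sum_mul_log_pushf_div_nonneg (ℓ := lastOff j) (replace := replaceLastOff j) hp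
    (fun w w' hww' => ?_) (fun w => sumOutNode_pos hQ _ _ _)
    (fun w z => blockHist_blockSnoc _ _) lastOff_replaceLastOff fun w => ?_
  · obtain ⟨hhist, hlast⟩ := Prod.mk.inj hww'
    rw [hhist]
    exact sumOutNode_congr fun l hl => congrFun hlast ⟨l, hl⟩
  · simp only [replaceLastOff, blockHist_blockSnoc, blockLast_blockSnoc]
    rw [sum_sumOutNode, hQ_sum]

/-- By the chain rule the two sides differ by two conditional divergences from `Q`: that of the
next symbol of `j` given the conditioning variables, and that of the other next symbols given the
past. -/
lemma MIsFactorizedAt.mCondMI_le (hfact : MIsFactorizedAt Q i j) (hij : i ≠ j)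
    (hQ : ∀ h s, 0 < Q h s) (hQ_sum : ∀ h, ∑ s, Q h s = 1) (hp : ∀ w, 0 ≤ p w) :
    mCondMI p i j ≤ ∑ w, p w *
      Real.log (p w / (pushf blockHist p (blockHist w) * Q (blockHist w) (blockLast w))) := by
  have hnonneg := add_nonneg (hfact.sum_mul_log_mMargB_div_nonneg hQ hp)
    (sum_mul_log_mMargC_div_nonneg hij hQ hQ_sum hp)
  rw [← sub_nonneg]
  refine hnonneg.trans_eq ?_
  rw [mCondMI, ← sum_sub_distrib, ← sum_add_distrib]
  refine sum_congr rfl fun w _ => ?_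
  rcases (hp w).eq_or_lt with hpw | hpw
  · simp [← hpw]
  have hA := hpw.trans_le (le_mMargA hp i j w)
  have hB := hpw.trans_le (le_mMargB hp i j w)
  have hC := hpw.trans_le (le_mMargC hij hp w)
  have hH := hpw.trans_le (le_pushf_apply hp blockHist w)
  have hQw := hQ (blockHist w) (blockLast w)
  have hS := sumOutNode_pos hQ j (blockHist w) (blockLast w)
  rw [← mul_sub, ← mul_add, ← Real.log_div (by positivity) (by positivity),
    ← Real.log_mul (by positivity) (by positivity)]
  congr 2
  field_simp

lemma eq_mMargC_mul_div_of_mCondMI_nonpos (hij : i ≠ j) (hp : ∀ w, 0 < p w)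
    (hMI : mCondMI p i j ≤ 0) (w : MBlk 𝒳 m (k + 1)) :
    p w = mMargC p i j w * (mMargB p i j w / mMargA p i j w) := by
  have hp' := fun w => (hp w).le
  have hA := fun w => (hp w).trans_le (le_mMargA hp' i j w)
  have hB := fun w => (hp w).trans_le (le_mMargB hp' i j w)
  have hpush : ∀ w, pushf (fun w => ((blockHist w, lastOff j w), blockLast w j)) p
      ((blockHist w, lastOff j w), blockLast w j) = p w :=
    pushf_apply_of_injective injective_hist_lastOff_last
  have hMI' : ∑ w, p w *
      Real.log (p w / (mMargC p i j w * (mMargB p i j w / mMargA p i j w))) ≤ 0 := by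
    refine le_of_eq_of_le (sum_congr rfl fun w _ => ?_) hMI
    congr 2
    have := (hA w).ne'
    field_simp
  have hkernel : ∀ w,
      ∑ y, mMargB p i j (replaceLast j w y) / mMargA p i j (replaceLast j w y) ≤ 1 := by
    intro w
    simp only [mMargA_replaceLast, ← sum_div, sum_mMargB_replaceLast]
    exact (div_self (hA w).ne').le
  rw [← hpush w, mMargC_eq_pushf hij]
  refine pushf_eq_mul_of_sum_mul_log_nonpos (f := fun w => (blockHist w, lastOff j w))
    (ℓ := fun w => blockLast w j) (u := fun w => mMargB p i j w / mMargA p i j w)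
    (replace := replaceLast j) hp'
    (fun w w' hww' => by rw [injective_hist_lastOff_last hww'])
    (fun w => div_pos (hB w) (hA w)) (fun w y => by simp) (fun w y => by simp) hkernel ?_ w
  simpa only [hpush, mMargC_eq_pushf hij] using hMI'

lemma mCondMI_pos_of_not_factorized (hij : i ≠ j) (hQ : ∀ h s, 0 < Q h s) {π : MBlk 𝒳 m k → ℝ}
    (hπ : ∀ h, 0 < π h) (hfact : ¬ MIsFactorizedAt Q i j) :
    0 < mCondMI (fun w => π (blockHist w) * Q (blockHist w) (blockLast w)) i j := by
  contrapose! hfact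
  set p := fun w : MBlk 𝒳 m (k + 1) => π (blockHist w) * Q (blockHist w) (blockLast w) with hp_def
  have hp : ∀ w, 0 < p w := fun w => mul_pos (hπ _) (hQ _ _)
  refine ⟨fun h s => mMargC p i j (blockSnoc h s) / π h,
    fun h s => mMargB p i j (blockSnoc h s) / mMargA p i j (blockSnoc h s),
    fun h s s' hs => ?_, fun h h' s s' hhj hsj hrest => ?_, fun h s => ?_⟩
  · have hoff : lastOff j (blockSnoc h s) = lastOff j (blockSnoc h s') :=
      funext fun l => by simpa [lastOff] using hs l l.2
    simp only [mMargC_eq_pushf hij, blockHist_blockSnoc, hoff]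
  · have hB : (condVars i j (blockSnoc h s), blockLast (blockSnoc h s) j) =
        (condVars i j (blockSnoc h' s'), blockLast (blockSnoc h' s') j) := by
      refine condVars_prod_last_eq_iff.2 ⟨?_, fun l hli hlj => ?_⟩
      · simp only [blockSnoc, hhj, hsj]
      · simp only [blockSnoc, hrest l hli hlj]
    simp only [mMargB_eq_pushf, mMargA_eq_pushf, (Prod.mk.inj hB).1, (Prod.mk.inj hB).2]
  · have hsplit := eq_mMargC_mul_div_of_mCondMI_nonpos hij hp hfact (blockSnoc h s)
    rw [div_mul_eq_mul_div, ← hsplit, hp_def]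
    simp [(hπ h).ne']

lemma continuousAt_mCondMI (hij : i ≠ j) (hp : ∀ w, 0 < p w) :
    ContinuousAt (fun q : MBlk 𝒳 m (k + 1) → ℝ => mCondMI q i j) p := by
  have hp' := fun w => (hp w).le
  refine tendsto_finsetSum _ fun w _ => ?_
  have hA := (hp w).trans_le (le_mMargA hp' i j w)
  have hB := (hp w).trans_le (le_mMargB hp' i j w)
  have hC := (hp w).trans_le (le_mMargC hij hp' w)
  have hcoord : ContinuousAt (fun q : MBlk 𝒳 m (k + 1) → ℝ => q w) p :=
    (continuous_apply w).continuousAt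
  simp only [mMargA_eq_pushf, mMargB_eq_pushf, mMargC_eq_pushf hij] at hA hB hC ⊢
  exact hcoord.mul (((hcoord.mul (continuous_pushf _ _).continuousAt).div
    ((continuous_pushf _ _).continuousAt.mul (continuous_pushf _ _).continuousAt)
    (mul_pos hB hC).ne').log (div_pos (mul_pos (hp w) hA) (mul_pos hB hC)).ne')

end DirectedInformation

/-! ### The chain of histories -/

section HistoryChain

variable {𝒳 Ω : Type*} {m k : ℕ}

/-- The columns at times `t, …, t + k - 1`, the state of the chain at time `t`. -/
def historyProcess (X : Fin m → ℕ → Ω → 𝒳) (k t : ℕ) (ω : Ω) : MBlk 𝒳 m k :=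
  fun l i => X l (t + i) ω

/-- The column at time `t + k`, the symbol emitted by the chain at time `t`. -/
def symbolProcess (X : Fin m → ℕ → Ω → 𝒳) (k t : ℕ) (ω : Ω) : MSym 𝒳 m :=
  fun l => X l (t + k) ω

/-- Drop the oldest column of `h` and append `s`; for `k = 0` there is nothing to shift. -/
def shiftHistory (h : MBlk 𝒳 m k) (s : MSym 𝒳 m) : MBlk 𝒳 m k := fun l i =>
  if hi : i.1 + 1 < k then h l ⟨i.1 + 1, hi⟩ else s l

lemma historyProcess_succ (X : Fin m → ℕ → Ω → 𝒳) (k t : ℕ) (ω : Ω) :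
    historyProcess X k (t + 1) ω =
      shiftHistory (historyProcess X k t ω) (symbolProcess X k t ω) := by
  funext l i
  simp only [historyProcess, shiftHistory, symbolProcess]
  split_ifs
  · rw [add_right_comm, add_assoc]
  · rw [show t + 1 + i = t + k by omega]

lemma exists_mem_suffix_eq_of_closed {A : Set (MBlk 𝒳 m k)} (hA : A.Nonempty)
    (hclosed : ∀ g ∈ A, ∀ s, shiftHistory g s ∈ A) (h : MBlk 𝒳 m k) {j : ℕ} (hj : j ≤ k) :
    ∃ g ∈ A, ∀ (l : Fin m) (i i' : Fin k), i.1 = k - j + i'.1 → g l i = h l i' := by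
  induction j with
  | zero =>
    obtain ⟨g, hg⟩ := hA
    exact ⟨g, hg, fun l i i' hi => by omega⟩
  | succ j ih =>
    obtain ⟨g, hg, suffix_eq⟩ := ih (by omega)
    refine ⟨shiftHistory g fun l => h l ⟨j, hj⟩, hclosed g hg _, fun l i i' hi => ?_⟩
    unfold shiftHistory
    split_ifs
    · exact suffix_eq l _ i' (by simp only; omega)
    · exact congrArg (h l) (Fin.ext (by simp only; omega))

lemma mem_of_shiftHistory_closed (A : Set (MBlk 𝒳 m k)) (hA : A.Nonempty)
    (hclosed : ∀ g ∈ A, ∀ s, shiftHistory g s ∈ A) (h : MBlk 𝒳 m k) : h ∈ A := by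
  obtain ⟨g, hg, suffix_eq⟩ := exists_mem_suffix_eq_of_closed hA hclosed h le_rfl
  rwa [← show g = h from funext₂ fun l i => suffix_eq l i i (by simp)]

lemma mblockEvent_eq (X : Fin m → ℕ → Ω → 𝒳) (k t : ℕ) (h : MBlk 𝒳 m k) :
    mblockEvent X t k h = {ω | historyProcess X k t ω = h} := by
  ext ω
  simp only [mblockEvent, Set.mem_ofPred_eq, historyProcess, funext_iff]

lemma symbolEvent_eq (X : Fin m → ℕ → Ω → 𝒳) (k t : ℕ) (s : MSym 𝒳 m) :
    {ω | ∀ l, X l (t + k) ω = s l} = {ω | symbolProcess X k t ω = s} := by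
  simp only [symbolProcess, funext_iff]

lemma past_eq_past_iff {X : Fin m → ℕ → Ω → 𝒳} {t : ℕ} {ω ω₀ : Ω} :
    past (historyProcess X k) (symbolProcess X k) t ω =
        past (historyProcess X k) (symbolProcess X k) t ω₀ ↔
      ∀ l, ∀ u < t + k, X l u ω = X l u ω₀ := by
  simp only [past, Prod.mk.injEq, funext_iff, historyProcess, symbolProcess, zero_add]
  refine ⟨fun ⟨initial_eq, later_eq⟩ l u hu => ?_,
    fun h => ⟨fun l i => h l i (by omega), fun u l => h l _ (by omega)⟩⟩
  by_cases hk : u < k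
  · exact initial_eq l ⟨u, hk⟩
  · simpa [Nat.sub_add_cancel (not_lt.1 hk)] using later_eq ⟨u - k, by omega⟩ l

lemma mblockEvent_inter_historyProcess (X : Fin m → ℕ → Ω → 𝒳) (k t : ℕ) (ω₀ : Ω) :
    mblockEvent X 0 t (historyProcess X t 0 ω₀) ∩ mblockEvent X t k (historyProcess X k t ω₀) =
      {ω | past (historyProcess X k) (symbolProcess X k) t ω =
        past (historyProcess X k) (symbolProcess X k) t ω₀} := by
  ext ω
  simp only [past_eq_past_iff, mblockEvent, historyProcess, Set.mem_inter_iff, Set.mem_ofPred_eq,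
    zero_add]
  refine ⟨fun ⟨early_eq, late_eq⟩ l u hu => ?_,
    fun h => ⟨fun l i => h l i (by omega), fun l i => h l _ (by omega)⟩⟩
  by_cases ht : u < t
  · exact early_eq l ⟨u, ht⟩
  · simpa [Nat.add_sub_cancel' (not_lt.1 ht)] using late_eq l ⟨u - t, by omega⟩

variable [MeasurableSpace Ω] {X : Fin m → ℕ → Ω → 𝒳}

lemma measurableSet_historyProcess_eq
    (hX : ∀ (l : Fin m) (t : ℕ) (x : 𝒳), MeasurableSet {ω | X l t ω = x}) (t : ℕ)
    (h : MBlk 𝒳 m k) : MeasurableSet {ω | historyProcess X k t ω = h} := by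
  simp only [historyProcess, funext_iff, Set.ofPred_forall]
  exact .iInter fun l => .iInter fun i => hX l _ _

lemma measurableSet_symbolProcess_eq
    (hX : ∀ (l : Fin m) (t : ℕ) (x : 𝒳), MeasurableSet {ω | X l t ω = x}) (t : ℕ)
    (s : MSym 𝒳 m) : MeasurableSet {ω | symbolProcess X k t ω = s} := by
  simp only [symbolProcess, funext_iff, Set.ofPred_forall]
  exact .iInter fun l => hX l _ _

variable {μ : Measure Ω} {Q : MBlk 𝒳 m k → MSym 𝒳 m → ℝ}

lemma MMarkovOfOrder.isDrivenBy (hMarkov : MMarkovOfOrder μ X k Q)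
    (hX : ∀ (l : Fin m) (t : ℕ) (x : 𝒳), MeasurableSet {ω | X l t ω = x}) :
    IsDrivenBy μ Q shiftHistory (historyProcess X k) (symbolProcess X k) where
  state_succ := historyProcess_succ X k
  measurableSet_state_zero := measurableSet_historyProcess_eq hX 0
  measurableSet_symbol := measurableSet_symbolProcess_eq hX
  markov t ω₀ s := by
    have transition := hMarkov t (historyProcess X t 0 ω₀) (historyProcess X k t ω₀) s
    rwa [mblockEvent_inter_historyProcess, symbolEvent_eq] at transition

lemma MMarkovOfOrder.measureReal_history_symbol (hMarkov : MMarkovOfOrder μ X k Q)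
    (x : MBlk 𝒳 m k × MSym 𝒳 m) :
    μ.real {ω | (historyProcess X k 0 ω, symbolProcess X k 0 ω) = x} =
      μ.real {ω | historyProcess X k 0 ω = x.1} * Q x.1 x.2 := by
  have transition := hMarkov 0 (fun _ i => i.elim0) x.1 x.2
  have trivial_past : mblockEvent X 0 0 (fun _ i => i.elim0) = Set.univ := by
    ext ω
    simp [mblockEvent]
  rw [trivial_past, Set.univ_inter, mblockEvent_eq, symbolEvent_eq] at transition
  simp only [Prod.ext_iff, mul_comm]
  exact transition

lemma MStationary.measureReal_historyProcess (hstat : MStationary μ X) (t : ℕ)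
    (h : MBlk 𝒳 m k) :
    μ.real {ω | historyProcess X k t ω = h} = μ.real {ω | historyProcess X k 0 ω = h} := by
  rw [← mblockEvent_eq, ← mblockEvent_eq, Measure.real, hstat t k h, Measure.real]

variable [Fintype 𝒳] [IsProbabilityMeasure μ]

lemma sum_measureReal_historyProcess
    (hX : ∀ (l : Fin m) (t : ℕ) (x : 𝒳), MeasurableSet {ω | X l t ω = x}) :
    ∑ h, μ.real {ω | historyProcess X k 0 ω = h} = 1 := by
  simpa using (integral_comp_eq_sum (μ := μ)
    (measurableSet_historyProcess_eq hX 0) fun _ : MBlk 𝒳 m k => (1 : ℝ)).symm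

/- Both sides are the mean of `f` over the history at time `1`. -/
lemma MMarkovOfOrder.sum_historyProcess_mul (hMarkov : MMarkovOfOrder μ X k Q)
    (hX : ∀ (l : Fin m) (t : ℕ) (x : 𝒳), MeasurableSet {ω | X l t ω = x})
    (hstat : MStationary μ X) (f : MBlk 𝒳 m k → ℝ) :
    ∑ h, μ.real {ω | historyProcess X k 0 ω = h} * ∑ s, Q h s * f (shiftHistory h s) =
      ∑ h, μ.real {ω | historyProcess X k 0 ω = h} * f h := by
  have measurableSet_pair (x : MBlk 𝒳 m k × MSym 𝒳 m) :
      MeasurableSet {ω | (historyProcess X k 0 ω, symbolProcess X k 0 ω) = x} := by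
    simp only [Prod.ext_iff]
    exact (measurableSet_historyProcess_eq hX 0 _).inter (measurableSet_symbolProcess_eq hX 0 _)
  calc ∑ h, μ.real {ω | historyProcess X k 0 ω = h} * ∑ s, Q h s * f (shiftHistory h s)
      = ∑ x : MBlk 𝒳 m k × MSym 𝒳 m,
          μ.real {ω | (historyProcess X k 0 ω, symbolProcess X k 0 ω) = x} •
            f (shiftHistory x.1 x.2) := by
        simp only [hMarkov.measureReal_history_symbol, Fintype.sum_prod_type, mul_sum, smul_eq_mul,
          mul_assoc]
    _ = ∫ ω, f (historyProcess X k 1 ω) ∂μ := by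
        rw [← integral_comp_eq_sum measurableSet_pair fun x => f (shiftHistory x.1 x.2)]
        exact integral_congr_ae (.of_forall fun ω => by simp only [historyProcess_succ X k 0])
    _ = ∑ h, μ.real {ω | historyProcess X k 0 ω = h} * f h := by
        simp only [integral_comp_eq_sum (measurableSet_historyProcess_eq hX 1) f,
          hstat.measureReal_historyProcess 1, smul_eq_mul]

lemma MMarkovOfOrder.isErgodicKernel (hMarkov : MMarkovOfOrder μ X k Q)
    (hX : ∀ (l : Fin m) (t : ℕ) (x : 𝒳), MeasurableSet {ω | X l t ω = x})
    (hstat : MStationary μ X) (hQ : MIsTransMat Q) (hQ_pos : ∀ h s, 0 < Q h s) :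
    IsErgodicKernel Q (fun h => μ.real {ω | historyProcess X k 0 ω = h}) shiftHistory where
  kernel_pos := hQ_pos
  sum_kernel := hQ.2
  stationary_nonneg _ := measureReal_nonneg
  sum_stationary := sum_measureReal_historyProcess hX
  invariant := hMarkov.sum_historyProcess_mul hX hstat
  mem_of_closed := mem_of_shiftHistory_closed

end HistoryChain

lemma tendsto_measureReal_not_of_tendstoInMeasure_const {Ω E ι : Type*} [MeasurableSpace Ω]
    {μ : Measure Ω} [IsFiniteMeasure μ] [PseudoMetricSpace E] {l : Filter ι} {f : ι → Ω → E} {c : E}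
    {p : E → Prop} (hf : TendstoInMeasure μ f l fun _ => c) (hp : ∀ᶠ x in 𝓝 c, p x) :
    Tendsto (fun n => μ.real {ω | ¬ p (f n ω)}) l (𝓝 0) := by
  obtain ⟨δ, hδ, near⟩ := Metric.eventually_nhds_iff.1 hp
  have deviation := (ENNReal.tendsto_toReal ENNReal.zero_ne_top).comp
    (tendstoInMeasure_iff_dist.1 hf δ hδ)
  exact squeeze_zero (fun n => measureReal_nonneg)
    (fun n => measureReal_mono fun ω hω => not_lt.1 fun h => hω (near h)) deviation

/-! ### The likelihood ratio of the counts -/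

section LikelihoodRatio

variable {Ω H S : Type*} {Hs : ℕ → Ω → H} {Ss : ℕ → Ω → S} [DecidableEq H]
  [DecidableEq S] {Q : H → S → ℝ}

lemma pairCount_le_stateCount (h : H) (s : S) (n : ℕ) (ω : Ω) :
    pairCount Hs Ss h s n ω ≤ stateCount Hs Ss h n ω := by
  simp only [pairCount, stateCount, additiveFunctional]
  refine sum_le_sum fun t _ => ?_
  split_ifs <;> simp_all

variable [Fintype H] [Fintype S]

lemma klfin_pairCount_le_pearsonStatistic (hQ : ∀ h s, 0 < Q h s) (hQ_sum : ∀ h, ∑ s, Q h s = 1)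
    (n : ℕ) (ω : Ω) :
    KLfin (fun x : H × S => pairCount Hs Ss x.1 x.2 n ω)
        (fun x => stateCount Hs Ss x.1 n ω * Q x.1 x.2) ≤ pearsonStatistic Q Hs Ss n ω := by
  rw [pearsonStatistic, ← Fintype.sum_prod_type']
  refine klfin_le_sum_sq_div (fun x => pairCount_nonneg _ _ _ _)
    (fun x => mul_nonneg (stateCount_nonneg _ _ _) (hQ _ _).le)
    (fun x hx => mul_pos (hx.trans_le (pairCount_le_stateCount _ _ _ _)) (hQ _ _)) ?_
  simp only [Fintype.sum_prod_type, sum_pairCount, ← mul_sum, hQ_sum, mul_one]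

lemma IsDrivenBy.measurable_pearsonStatistic [MeasurableSpace Ω] {μ : Measure Ω}
    {step : H → S → H} (hD : IsDrivenBy μ Q step Hs Ss) (n : ℕ) :
    Measurable (pearsonStatistic Q Hs Ss n) := by
  have measurable_functional (φ : H → S → ℝ) : Measurable (additiveFunctional Hs Ss φ n) :=
    hD.measurable_of_factorsThrough_past (hD.additiveFunctional_factorsThrough_past φ le_rfl)
  unfold pearsonStatistic pairCount stateCount
  fun_prop

end LikelihoodRatio

/-! ### The empirical directed information -/

section Estimator

variable {𝒳 Ω : Type*} {m k n : ℕ}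

lemma card_history_mul_card_symbol_sub_one [Fintype 𝒳] :
    Fintype.card (MBlk 𝒳 m k) * (Fintype.card (MSym 𝒳 m) - 1) =
      Fintype.card 𝒳 ^ (m * k) * (Fintype.card 𝒳 ^ m - 1) := by
  simp only [Fintype.card_fun, Fintype.card_fin, ← pow_mul, mul_comm k m]

variable [DecidableEq 𝒳]

lemma mEmpDist_eq_pairCount_div (X : Fin m → ℕ → Ω → 𝒳) (w : MBlk 𝒳 m (k + 1)) (ω : Ω) :
    mEmpDist X k n w ω = pairCount (historyProcess X k) (symbolProcess X k) (blockHist w)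
      (blockLast w) (n - k) ω / (n - k : ℕ) := by
  rw [mEmpDist, div_eq_inv_mul, pairCount, additiveFunctional]
  congr! 3 with t
  simp only [historyProcess, symbolProcess, blockHist, blockLast, Fin.init, funext_iff,
    Fin.forall_fin_succ', forall_and, Fin.val_castSucc, Fin.val_last]

variable [Fintype 𝒳]

lemma pushf_blockHist_mEmpDist (X : Fin m → ℕ → Ω → 𝒳) (h : MBlk 𝒳 m k) (ω : Ω) :
    pushf blockHist (fun w => mEmpDist X k n w ω) h =
      stateCount (historyProcess X k) (symbolProcess X k) h (n - k) ω / (n - k : ℕ) := by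
  rw [← sum_pushf_prodMk blockHist blockLast, ← sum_pairCount, sum_div]
  refine sum_congr rfl fun s _ => ?_
  have pushf_eq := pushf_apply_of_injective (p := fun w => mEmpDist X k n w ω)
    (f := fun w => (blockHist w, blockLast w)) (blockEquiv 𝒳 m k).injective (blockSnoc h s)
  simpa only [mEmpDist_eq_pairCount_div, blockHist_blockSnoc, blockLast_blockSnoc] using pushf_eq

variable {Q : MBlk 𝒳 m k → MSym 𝒳 m → ℝ} {i j : Fin m}

lemma mul_sum_mEmpDist_log_eq_klfin (X : Fin m → ℕ → Ω → 𝒳) (Q : MBlk 𝒳 m k → MSym 𝒳 m → ℝ)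
    (ω : Ω) :
    ((n - k : ℕ) : ℝ) * ∑ w, mEmpDist X k n w ω * Real.log (mEmpDist X k n w ω /
        (pushf blockHist (fun w => mEmpDist X k n w ω) (blockHist w) *
          Q (blockHist w) (blockLast w))) =
      KLfin
        (fun x : MBlk 𝒳 m k × MSym 𝒳 m =>
          pairCount (historyProcess X k) (symbolProcess X k) x.1 x.2 (n - k) ω)
        (fun x => stateCount (historyProcess X k) (symbolProcess X k) x.1 (n - k) ω *
          Q x.1 x.2) := by
  rw [KLfin, ← (blockEquiv 𝒳 m k).sum_comp, mul_sum]
  refine sum_congr rfl fun w _ => ?_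
  rw [pushf_blockHist_mEmpDist, mEmpDist_eq_pairCount_div, blockEquiv_apply]
  rcases Nat.eq_zero_or_pos (n - k) with hN | hN
  · simp [hN, pairCount, additiveFunctional]
  · have hN' : ((n - k : ℕ) : ℝ) ≠ 0 := by positivity
    rw [← mul_assoc, mul_div_cancel₀ _ hN', div_mul_eq_mul_div, div_div_div_cancel_right₀ hN']

lemma MIsFactorizedAt.mul_mCondMI_mEmpDist_le (hfact : MIsFactorizedAt Q i j) (hij : i ≠ j)
    (hQ : ∀ h s, 0 < Q h s) (hQ_sum : ∀ h, ∑ s, Q h s = 1) (X : Fin m → ℕ → Ω → 𝒳) (ω : Ω) :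
    ((n - k : ℕ) : ℝ) * mCondMI (fun w => mEmpDist X k n w ω) i j ≤
      pearsonStatistic Q (historyProcess X k) (symbolProcess X k) (n - k) ω := by
  have mEmpDist_nonneg (w : MBlk 𝒳 m (k + 1)) : 0 ≤ mEmpDist X k n w ω := by
    unfold mEmpDist
    positivity
  have mCondMI_le := hfact.mCondMI_le hij hQ hQ_sum mEmpDist_nonneg
  refine (mul_le_mul_of_nonneg_left mCondMI_le (Nat.cast_nonneg _)).trans ?_
  rw [mul_sum_mEmpDist_log_eq_klfin]
  exact klfin_pairCount_le_pearsonStatistic hQ hQ_sum _ ω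

lemma estAdj_eq_true_iff (hij : i ≠ j) {X : Fin m → ℕ → Ω → 𝒳} {Ith : ℝ} {ω : Ω} :
    estAdj X k n Ith ω i j = true ↔
      Ith ≤ ((n - k : ℕ) : ℝ) * mCondMI (fun w => mEmpDist X k n w ω) i j := by
  simp [estAdj, hij]

variable [MeasurableSpace Ω] {μ : Measure Ω} [IsProbabilityMeasure μ] {X : Fin m → ℕ → Ω → 𝒳}

lemma MIsFactorizedAt.eventually_measureReal_estAdj_eq_true_lt (hfact : MIsFactorizedAt Q i j)
    (hij : i ≠ j) {π : MBlk 𝒳 m k → ℝ} (hK : IsErgodicKernel Q π shiftHistory)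
    (hD : IsDrivenBy μ Q shiftHistory (historyProcess X k) (symbolProcess X k)) {Ith c : ℝ}
    (hc : 1 - (chiSq ↑(Fintype.card 𝒳 ^ (m * k) * (Fintype.card 𝒳 ^ m - 1))).real
      (Set.Iic Ith) < c) :
    ∀ᶠ n in atTop, μ.real {ω | estAdj X k n Ith ω i j = true} < c := by
  rw [← card_history_mul_card_symbol_sub_one] at hc
  have accept := hD.eventually_lt_measureReal_pearsonStatistic_lt hK (sub_lt_comm.1 hc)
  filter_upwards [(tendsto_sub_atTop_nat k).eventually accept] with n hn
  calc μ.real {ω | estAdj X k n Ith ω i j = true}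
      ≤ μ.real {ω | pearsonStatistic Q (historyProcess X k) (symbolProcess X k) (n - k) ω < Ith}ᶜ :=
        measureReal_mono fun ω hω => not_lt.2 (((estAdj_eq_true_iff hij).1 hω).trans
          (hfact.mul_mCondMI_mEmpDist_le hij hK.kernel_pos hK.sum_kernel X ω))
    _ = 1 - μ.real
          {ω | pearsonStatistic Q (historyProcess X k) (symbolProcess X k) (n - k) ω < Ith} :=
        probReal_compl_eq_one_sub
          (measurableSet_lt (hD.measurable_pearsonStatistic _) measurable_const)
    _ < c := sub_lt_comm.1 hn

lemma tendstoInMeasure_mEmpDist {π : MBlk 𝒳 m k → ℝ} (hK : IsErgodicKernel Q π shiftHistory)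
    (hD : IsDrivenBy μ Q shiftHistory (historyProcess X k) (symbolProcess X k)) :
    TendstoInMeasure μ (fun n ω w => mEmpDist X k n w ω) atTop
      fun _ w => π (blockHist w) * Q (blockHist w) (blockLast w) := by
  refine tendstoInMeasure_pi fun w => ?_
  simp only [mEmpDist_eq_pairCount_div]
  exact (hD.tendstoInMeasure_pairCount_div hK _ _).comp (tendsto_sub_atTop_nat k)

lemma tendsto_measureReal_estAdj_eq_false (hfact : ¬ MIsFactorizedAt Q i j) (hij : i ≠ j)
    {π : MBlk 𝒳 m k → ℝ} (hK : IsErgodicKernel Q π shiftHistory)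
    (hD : IsDrivenBy μ Q shiftHistory (historyProcess X k) (symbolProcess X k)) (Ith : ℝ) :
    Tendsto (fun n => μ.real {ω | estAdj X k n Ith ω i j = false}) atTop (𝓝 0) := by
  have law_pos (w : MBlk 𝒳 m (k + 1)) : 0 < π (blockHist w) * Q (blockHist w) (blockLast w) :=
    mul_pos (hK.stationary_pos _) (hK.kernel_pos _ _)
  have information_pos := mCondMI_pos_of_not_factorized hij hK.kernel_pos hK.stationary_pos hfact
  obtain ⟨a, ha, ha_lt⟩ := exists_between information_pos
  have divergence : ∀ᶠ n : ℕ in atTop, Ith ≤ ((n - k : ℕ) : ℝ) * a :=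
    (tendsto_sub_atTop_nat k).eventually
      ((tendsto_natCast_atTop_atTop.atTop_mul_const ha).eventually_ge_atTop Ith)
  have deviation := tendsto_measureReal_not_of_tendstoInMeasure_const
    (E := MBlk 𝒳 m (k + 1) → ℝ) (tendstoInMeasure_mEmpDist hK hD)
    ((continuousAt_mCondMI hij law_pos).eventually (lt_mem_nhds ha_lt))
  refine squeeze_zero' (.of_forall fun n => measureReal_nonneg) ?_ deviation
  filter_upwards [divergence] with n hn
  refine measureReal_mono fun ω (not_detected : estAdj X k n Ith ω i j = false) close => ?_
  have detected := (estAdj_eq_true_iff hij).2 (hn.trans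
    (mul_le_mul_of_nonneg_left close.le (Nat.cast_nonneg _)))
  exact Bool.false_ne_true (not_detected.symm.trans detected)

end Estimator

/-! ### The whole graph -/

lemma one_sub_sum_le_liminf_measureReal {Ω ι : Type*} [MeasurableSpace Ω] {μ : Measure Ω}
    [IsProbabilityMeasure μ] {s : Finset ι} {good : ℕ → Set Ω} {bad : ι → ℕ → Set Ω} {b : ι → ℝ}
    (hcover : ∀ n, good n ∪ ⋃ p ∈ s, bad p n = Set.univ)
    (hbad : ∀ p ∈ s, ∀ c > b p, ∀ᶠ n in atTop, μ.real (bad p n) < c) :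
    1 - ∑ p ∈ s, b p ≤ liminf (fun n => μ.real (good n)) atTop := by
  refine le_of_forall_sub_le fun ε hε => ?_
  obtain ⟨δ, hδ, hδε⟩ := exists_pos_mul_lt hε (#s : ℝ)
  refine le_liminf_of_le
    (isBoundedUnder_of ⟨1, fun n => measureReal_le_one⟩).isCoboundedUnder_ge ?_
  have all_bad : ∀ᶠ n in atTop, ∀ p ∈ s, μ.real (bad p n) < b p + δ :=
    (eventually_all_finset s).2 fun p hp => hbad p hp _ (lt_add_of_pos_right _ hδ)
  filter_upwards [all_bad] with n hn
  have bad_le : ∑ p ∈ s, μ.real (bad p n) ≤ ∑ p ∈ s, b p + #s * δ := by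
    simpa only [sum_add_distrib, sum_const, nsmul_eq_mul] using sum_le_sum fun p hp => (hn p hp).le
  have one_le : 1 ≤ μ.real (good n) + ∑ p ∈ s, μ.real (bad p n) :=
    calc 1 = μ.real (good n ∪ ⋃ p ∈ s, bad p n) := by rw [hcover, probReal_univ]
      _ ≤ μ.real (good n) + μ.real (⋃ p ∈ s, bad p n) := measureReal_union_le _ _
      _ ≤ _ := by gcongr; exact measureReal_biUnion_finset_le _ _
  linarith

lemma sum_offDiag_ite_eq_card_mul {ι : Type*} [Fintype ι] [DecidableEq ι] (V : ι → ι → Bool)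
    (a : ℝ) :
    ∑ p ∈ univ.offDiag, (if V p.1 p.2 = true then 0 else a) =
      ((Fintype.card ι * (Fintype.card ι - 1) -
        #{p : ι × ι | p.1 ≠ p.2 ∧ V p.1 p.2 = true} : ℕ) : ℝ) * a := by
  have card_offDiag : #(univ : Finset ι).offDiag = Fintype.card ι * (Fintype.card ι - 1) := by
    rw [offDiag_card, card_univ, Nat.mul_sub, mul_one]
  have edges_eq : ({p : ι × ι | p.1 ≠ p.2 ∧ V p.1 p.2 = true} : Finset _) =
      (univ : Finset ι).offDiag.filter fun p => V p.1 p.2 = true := by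
    ext p
    simp
  have card_split := card_filter_add_card_filter_not (s := (univ : Finset ι).offDiag)
    (fun p => V p.1 p.2 = true)
  rw [edges_eq, ← card_offDiag, ← card_split, Nat.add_sub_cancel_left, sum_ite, sum_const_zero,
    zero_add, sum_const, nsmul_eq_mul]

section Graph

variable {𝒳 Ω : Type*} [Fintype 𝒳] [DecidableEq 𝒳] [MeasurableSpace Ω] {μ : Measure Ω}
  [IsProbabilityMeasure μ] {m k : ℕ} {Q : MBlk 𝒳 m k → MSym 𝒳 m → ℝ} {π : MBlk 𝒳 m k → ℝ}
  {X : Fin m → ℕ → Ω → 𝒳} {Ith : ℝ} {Vstar : Fin m → Fin m → Bool} {i j : Fin m}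

lemma eventually_measureReal_estAdj_ne_lt (hK : IsErgodicKernel Q π shiftHistory)
    (hD : IsDrivenBy μ Q shiftHistory (historyProcess X k) (symbolProcess X k)) (hij : i ≠ j)
    {v : Bool} (hv : v = true ↔ ¬ MIsFactorizedAt Q i j) {c : ℝ}
    (hc : (if v = true then 0 else
      1 - (chiSq ↑(Fintype.card 𝒳 ^ (m * k) * (Fintype.card 𝒳 ^ m - 1))).real (Set.Iic Ith)) < c) :
    ∀ᶠ n in atTop, μ.real {ω | estAdj X k n Ith ω i j ≠ v} < c := by
  cases v with
  | true =>
    simpa only [ne_eq, Bool.not_eq_true] using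
      (tendsto_measureReal_estAdj_eq_false (hv.1 rfl) hij hK hD Ith).eventually_lt_const hc
  | false =>
    have hfact : MIsFactorizedAt Q i j := by simpa using hv
    simpa only [ne_eq, Bool.not_eq_false] using
      hfact.eventually_measureReal_estAdj_eq_true_lt hij hK hD hc

lemma limsup_measureReal_estAdj_eq_le (hK : IsErgodicKernel Q π shiftHistory)
    (hD : IsDrivenBy μ Q shiftHistory (historyProcess X k) (symbolProcess X k)) (hij : i ≠ j)
    (hV : Vstar i j = true ↔ MIsFactorizedAt Q i j) :
    limsup (fun n => μ.real {ω | ∀ i j, estAdj X k n Ith ω i j = Vstar i j}) atTop ≤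
      1 - (chiSq ↑(Fintype.card 𝒳 ^ (m * k) * (Fintype.card 𝒳 ^ m - 1))).real (Set.Iic Ith) := by
  have wrong_entry (c : ℝ) (hc : 1 - (chiSq ↑(Fintype.card 𝒳 ^ (m * k) *
      (Fintype.card 𝒳 ^ m - 1))).real (Set.Iic Ith) < c) :
      ∀ᶠ n in atTop, μ.real {ω | estAdj X k n Ith ω i j ≠ !Vstar i j} < c := by
    refine eventually_measureReal_estAdj_ne_lt (Ith := Ith) hK hD hij (by simp [← hV]) ?_
    split_ifs
    · exact (sub_nonneg.2 (measureReal_chiSq_natCast_le_one _ _)).trans_lt hc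
    · exact hc
  refine le_of_forall_gt_imp_ge_of_dense fun c hc => ?_
  refine limsup_le_of_le (isBoundedUnder_of ⟨0, fun n => measureReal_nonneg⟩).isCoboundedUnder_le ?_
  filter_upwards [wrong_entry c hc] with n hn
  refine (measureReal_mono fun ω hω => ?_).trans hn.le
  simp [(show ∀ i j, estAdj X k n Ith ω i j = Vstar i j from hω) i j]

lemma one_sub_sum_le_liminf_measureReal_estAdj_eq (hK : IsErgodicKernel Q π shiftHistory)
    (hD : IsDrivenBy μ Q shiftHistory (historyProcess X k) (symbolProcess X k))
    (hdiag : ∀ i, Vstar i i = false)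
    (hV : ∀ i j, i ≠ j → (Vstar i j = true ↔ ¬ MIsFactorizedAt Q i j)) :
    1 - ∑ p ∈ univ.offDiag, (if Vstar p.1 p.2 = true then 0 else
      1 - (chiSq ↑(Fintype.card 𝒳 ^ (m * k) * (Fintype.card 𝒳 ^ m - 1))).real (Set.Iic Ith)) ≤
      liminf (fun n => μ.real {ω | ∀ i j, estAdj X k n Ith ω i j = Vstar i j}) atTop := by
  refine one_sub_sum_le_liminf_measureReal
    (bad := fun p n => {ω | estAdj X k n Ith ω p.1 p.2 ≠ Vstar p.1 p.2})
    (fun n => Set.eq_univ_of_forall fun ω => or_iff_not_imp_left.2 fun hω => ?_)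
    fun p hp c hc => ?_
  · obtain ⟨i, j, hne⟩ : ∃ i j, estAdj X k n Ith ω i j ≠ Vstar i j := by
      simpa using hω
    have hij : i ≠ j := by
      rintro rfl
      exact hne (by simp [estAdj, hdiag])
    exact Set.mem_biUnion (x := (i, j)) (by simpa using hij) hne
  · have hne := (mem_offDiag.1 hp).2.2
    exact eventually_measureReal_estAdj_ne_lt hK hD hne (hV _ _ hne) hc

end Graph

theorem graph_hypothesis_test_bounds_general {𝒳 Ω : Type*} [Fintype 𝒳] [DecidableEq 𝒳]
    [MeasurableSpace Ω] (μ : Measure Ω) [IsProbabilityMeasure μ] {m : ℕ} (X : Fin m → ℕ → Ω → 𝒳)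
    (k : ℕ) (Q : MBlk 𝒳 m k → MSym 𝒳 m → ℝ)
    (hmeas : ∀ (l : Fin m) (t : ℕ) (x : 𝒳), MeasurableSet {ω | X l t ω = x})
    (hQ : MIsTransMat Q) (hQpos : ∀ h s, 0 < Q h s) (hMarkov : MMarkovOfOrder μ X k Q)
    (hstat : MStationary μ X) (Ith : ℝ) (Vstar : Fin m → Fin m → Bool)
    (hdiag : ∀ i, Vstar i i = false) :
    ((∃ i j : Fin m, i ≠ j ∧ ((Vstar i j = true) ↔ MIsFactorizedAt Q i j)) →
      limsup (fun n => mreal μ {ω | ∀ i j, estAdj X k n Ith ω i j = Vstar i j}) atTop ≤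
        1 - (chiSq ((Fintype.card 𝒳 ^ (m * k) * (Fintype.card 𝒳 ^ m - 1) : ℕ) : ℝ)
          (Set.Iic Ith)).toReal) ∧
    ((∀ i j : Fin m, i ≠ j → ((Vstar i j = true) ↔ ¬ MIsFactorizedAt Q i j)) →
      max (1 - ((m * (m - 1) - #{p : Fin m × Fin m | p.1 ≠ p.2 ∧ Vstar p.1 p.2 = true} : ℕ) : ℝ) *
          (1 - (chiSq ((Fintype.card 𝒳 ^ (m * k) * (Fintype.card 𝒳 ^ m - 1) : ℕ) : ℝ)
            (Set.Iic Ith)).toReal)) 0 ≤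
        liminf (fun n => mreal μ {ω | ∀ i j, estAdj X k n Ith ω i j = Vstar i j}) atTop) := by
  have hK := hMarkov.isErgodicKernel hmeas hstat hQ hQpos
  have hD := hMarkov.isDrivenBy hmeas
  refine ⟨fun ⟨i, j, hij, hV⟩ => limsup_measureReal_estAdj_eq_le hK hD hij hV,
    fun hV => max_le ?_ ?_⟩
  · have count := sum_offDiag_ite_eq_card_mul Vstar
      (1 - (chiSq ↑(Fintype.card 𝒳 ^ (m * k) * (Fintype.card 𝒳 ^ m - 1))).real (Set.Iic Ith))
    rw [Fintype.card_fin] at count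
    exact count ▸ one_sub_sum_le_liminf_measureReal_estAdj_eq hK hD hdiag hV
  · exact le_liminf_of_le (isBoundedUnder_of ⟨1, fun n => measureReal_le_one⟩).isCoboundedUnder_ge
      (.of_forall fun n => measureReal_nonneg)

end DIG

namespace DIG

variable {𝒳 : Type*} [Fintype 𝒳] [DecidableEq 𝒳] [Nonempty 𝒳]
variable {Ω : Type*} [MeasurableSpace Ω]

/-- Bounds on the asymptotic false-alarm and detection probabilities of
the hypothesis test for the whole graph: if the true adjacency matrix differs from the
hypothesis `V*` then `limsup P(V̂ = V*) ≤ 1 − F_r(I_th)`, and if they coincide then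
`liminf P(V̂ = V*) ≥ max{1 − N₀(1 − F_r(I_th)), 0}`, with `r = |𝒳|^{mk}(|𝒳|^m − 1)`,
`N₁` the number of off-diagonal ones of `V*` and `N₀ = m(m−1) − N₁`. -/
theorem graph_hypothesis_test_bounds
    (μ : MeasureTheory.Measure Ω) [MeasureTheory.IsProbabilityMeasure μ]
    {m : ℕ} (X : Fin m → ℕ → Ω → 𝒳) (k : ℕ) (Q : MBlk 𝒳 m k → MSym 𝒳 m → ℝ)
    (hmeas : ∀ (l : Fin m) (t : ℕ) (x : 𝒳), MeasurableSet {ω | X l t ω = x})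
    (hQ : MIsTransMat Q) (hQpos : ∀ h s, 0 < Q h s)
    (hMarkov : MMarkovOfOrder μ X k Q)
    (hstat : MStationary μ X)
    (hA3 : MCondIndepPast μ X k)
    (Ith : ℝ) (hIth : 0 < Ith)
    (Vstar : Fin m → Fin m → Bool) (hdiag : ∀ i, Vstar i i = false) :
    ((∃ i j : Fin m, i ≠ j ∧ ((Vstar i j = true) ↔ MIsFactorizedAt Q i j)) →
      Filter.limsup
          (fun n => mreal μ {ω | ∀ i j, estAdj X k n Ith ω i j = Vstar i j}) atTop
        ≤ 1 - (chiSq ((Fintype.card 𝒳 ^ (m * k) * (Fintype.card 𝒳 ^ m - 1) : ℕ) : ℝ)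
            (Set.Iic Ith)).toReal) ∧
    ((∀ i j : Fin m, i ≠ j → ((Vstar i j = true) ↔ ¬ MIsFactorizedAt Q i j)) →
      max (1 - ((m * (m - 1) -
            (Finset.univ.filter
              (fun pr : Fin m × Fin m => pr.1 ≠ pr.2 ∧ Vstar pr.1 pr.2 = true)).card : ℕ) : ℝ) *
          (1 - (chiSq ((Fintype.card 𝒳 ^ (m * k) * (Fintype.card 𝒳 ^ m - 1) : ℕ) : ℝ)
            (Set.Iic Ith)).toReal)) 0
        ≤ Filter.liminf
            (fun n => mreal μ {ω | ∀ i j, estAdj X k n Ith ω i j = Vstar i j}) atTop) := by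
  exact graph_hypothesis_test_bounds_general μ X k Q hmeas hQ hQpos hMarkov hstat Ith Vstar hdiag

end DIG
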